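/- arXiv:2306.09655 — 3 statements merged into one kernel-verified Lean document; each statement's English description precedes it below -/
import Mathlib

section
/- Let D be a strong digraph of order n ≥ 3 and let z be an arbitrary vertex of D. Suppose that d(x) + d(y) ≥ 2n−1 for every pair of non-adjacent vertices x, y ∈ V(D) \ {z}. Then D is Hamiltonian or D contains a directed cycle of length n−1. -/
/-! A digraph on a vertex type `V` is given by its arc relation `A : V → V → Prop`
(this automatically forbids multiple arcs); looplessness is expressed by the
hypothesis `Irreflexive A`. -/

/-- The degree of `x`: its out-degree plus its in-degree. -/
noncomputable def degree {V : Type*} (A : V → V → Prop) (x : V) : ℕ :=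
  {y | A x y}.ncard + {y | A y x}.ncard

/-- `degreeIn A x S` is the number of arcs between `x` and vertices of `S`,
in both directions. -/
noncomputable def degreeIn {V : Type*} (A : V → V → Prop) (x : V) (S : Set V) : ℕ :=
  {y ∈ S | A x y}.ncard + {y ∈ S | A y x}.ncard

/-- `c : Fin m → V` is a directed cycle of length `m` (indices taken mod `m`). -/
def IsCycle {V : Type*} (A : V → V → Prop) {m : ℕ} (c : Fin m → V) : Prop :=
  2 ≤ m ∧ Function.Injective c ∧
    ∀ i : Fin m, A (c i) (c ⟨(i.val + 1) % m, Nat.mod_lt _ i.pos⟩)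

/-- `p : Fin m → V` is a directed path on `m` vertices (of length `m - 1`). -/
def IsPath {V : Type*} (A : V → V → Prop) {m : ℕ} (p : Fin m → V) : Prop :=
  Function.Injective p ∧ ∀ (i : Fin m) (h : i.val + 1 < m), A (p i) (p ⟨i.val + 1, h⟩)

/-- A digraph is Hamiltonian if it has a directed cycle through all of its vertices. -/
def IsHamiltonian {V : Type*} [Fintype V] (A : V → V → Prop) : Prop :=
  ∃ c : Fin (Fintype.card V) → V, IsCycle A c ∧ Function.Surjective c

/-- Reachability by a directed path staying inside the set `S`. -/
def ReachIn {V : Type*} (A : V → V → Prop) (S : Set V) : V → V → Prop :=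
  Relation.ReflTransGen (fun u v => u ∈ S ∧ v ∈ S ∧ A u v)

/-- A digraph is strong if every vertex is reachable from every other by a directed path. -/
def IsStrong {V : Type*} (A : V → V → Prop) : Prop :=
  ∀ x y : V, Relation.ReflTransGen A x y

/-- A digraph is `k`-strong if it has at least `k + 1` vertices and the deletion of
any set of at most `k - 1` vertices leaves a strong digraph. -/
def IsKStrong {V : Type*} [Fintype V] (A : V → V → Prop) (k : ℕ) : Prop :=
  k + 1 ≤ Fintype.card V ∧
    ∀ S : Set V, S.ncard ≤ k - 1 → ∀ x ∈ Sᶜ, ∀ y ∈ Sᶜ, ReachIn A Sᶜ x y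

/-!
Among all directed cycles choose a cycle `C` whose set of vertices other than `z` is maximal and,
subject to this, whose whole vertex set is maximal. Suppose that `C` misses a vertex other than
`z`. By strength and the degree condition some path `R` outside `C`, with a vertex `x ≠ z`, leads
from the end of a segment `P` of `C` back to its beginning; take it so that the complementary
segment `S` is as short as possible. Then no arc joins `x` to `S`, and a path of length two outside
`C` between `x` and `S` can only pass through `z`, which is then an end of `R`.

Insert vertices of `S` into `P` one after the other as long as possible, which gives a path `Q`
with the ends of `P`. By maximality of `C` some `s ∈ S` different from `z` is left over, since
otherwise `Q` and `R` form a better cycle. A vertex that cannot be inserted into a path on `k`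
vertices is joined to it by at most `k + 1` arcs, so `d(x) + d(s) ≤ 2n - 2 + |P| - |Q| + m`, where
`m ≤ 1` counts the paths of length two between `x` and `s` through `z`. Hence `m = 1` and `Q` has
the vertices of `P`, so the same holds for every vertex of `S`: either `z` begins `R` and sends an
arc to all of `S`, or `z` ends `R` and receives an arc from all of `S`. In the first case `z` could
be inserted into `C` between `P` and `S`, in the second between `S` and `P`, contradicting the
choice of `C`.
-/

section Degree

variable {V : Type*} {A : V → V → Prop}

/-- The vertices `w` of `U` through which there is a path `x → w → y`. -/
def midVertices (A : V → V → Prop) (U : Set V) (x y : V) : Set V :=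
  {w ∈ U | A x w ∧ A w y}

/-- The vertex `w` can be inserted into the path `l` between two consecutive vertices. -/
def IsInsertable (A : V → V → Prop) (w : V) (l : List V) : Prop :=
  ∃ l₁ a b l₂, l = l₁ ++ a :: b :: l₂ ∧ A a w ∧ A w b

/-- Meyniel's degree condition, imposed only on the vertices other than `z`. -/
def IsMeynielOff (A : V → V → Prop) (z : V) : Prop :=
  ∀ x y : V, x ≠ z → y ≠ z → x ≠ y → ¬ A x y → ¬ A y x →
    2 * Nat.card V - 1 ≤ degree A x + degree A y

theorem degreeIn_univ (x : V) : degreeIn A x Set.univ = degree A x := by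
  simp [degreeIn, degree]

theorem degreeIn_union_le (x : V) (S T : Set V) :
    degreeIn A x (S ∪ T) ≤ degreeIn A x S + degreeIn A x T := by
  have sep_union_le (p : V → Prop) :
      {y ∈ S ∪ T | p y}.ncard ≤ {y ∈ S | p y}.ncard + {y ∈ T | p y}.ncard := by
    have hsep : {y ∈ S ∪ T | p y} = {y ∈ S | p y} ∪ {y ∈ T | p y} :=
      Set.union_inter_distrib_right ..
    rw [hsep]
    exact Set.ncard_union_le _ _
  have hout := sep_union_le (A x ·)
  have hin := sep_union_le (A · x)
  unfold degreeIn
  omega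

open Classical in
theorem degreeIn_singleton (x y : V) :
    degreeIn A x {y} = (if A x y then 1 else 0) + (if A y x then 1 else 0) := by
  have ncard_sep (p : V → Prop) : {w ∈ ({y} : Set V) | p w}.ncard = if p y then 1 else 0 := by
    split_ifs with h
    · rw [Set.sep_eq_self_iff_mem_true.2 (by simpa using h), Set.ncard_singleton]
    · rw [Set.sep_eq_empty_iff_mem_false.2 (by simpa using h), Set.ncard_empty]
  rw [degreeIn, ncard_sep, ncard_sep]

theorem degreeIn_eq_zero {x : V} {S : Set V} (h : ∀ y ∈ S, ¬ A x y ∧ ¬ A y x) :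
    degreeIn A x S = 0 := by
  rw [degreeIn, Set.sep_eq_empty_iff_mem_false.2 fun y hy => (h y hy).1,
    Set.sep_eq_empty_iff_mem_false.2 fun y hy => (h y hy).2, Set.ncard_empty]

theorem degreeIn_le_two_mul_ncard [Finite V] (hirr : ∀ v, ¬ A v v) (x : V) (S : Set V) :
    degreeIn A x S ≤ 2 * (S \ {x}).ncard := by
  have hout : {y ∈ S | A x y} ⊆ S \ {x} := fun y hy => ⟨hy.1, by rintro rfl; exact hirr y hy.2⟩
  have hin : {y ∈ S | A y x} ⊆ S \ {x} := fun y hy => ⟨hy.1, by rintro rfl; exact hirr y hy.2⟩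
  rw [degreeIn, two_mul]
  exact add_le_add (Set.ncard_le_ncard hout) (Set.ncard_le_ncard hin)

theorem ncard_out_add_ncard_in_le [Finite V] (hirr : ∀ v, ¬ A v v) {x y : V} (hxy : ¬ A x y)
    (U : Set V) : {w ∈ U | A x w}.ncard + {w ∈ U | A w y}.ncard ≤
      (U \ {x, y}).ncard + (midVertices A U x y).ncard := by
  rw [← Set.ncard_union_add_ncard_inter]
  refine add_le_add (Set.ncard_le_ncard ?_) (Set.ncard_le_ncard ?_)
  · rintro w (⟨hw, hxw⟩ | ⟨hw, hwy⟩)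
    · exact ⟨hw, by rintro (rfl | rfl); exacts [hirr _ hxw, hxy hxw]⟩
    · exact ⟨hw, by rintro (rfl | rfl); exacts [hxy hwy, hirr _ hwy]⟩
  · exact fun w hw => ⟨hw.1.1, hw.1.2, hw.2.2⟩

theorem degreeIn_add_degreeIn_le [Finite V] (hirr : ∀ v, ¬ A v v) {x y : V} (hxy : ¬ A x y)
    (hyx : ¬ A y x) (U : Set V) : degreeIn A x U + degreeIn A y U ≤
      2 * (U \ {x, y}).ncard + (midVertices A U x y).ncard + (midVertices A U y x).ncard := by
  have hforth := ncard_out_add_ncard_in_le hirr hxy U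
  have hback := ncard_out_add_ncard_in_le hirr hyx U
  rw [Set.pair_comm] at hback
  unfold degreeIn
  omega

theorem degreeIn_le_length_add_one {w : V} {l : List V} (h : ¬ IsInsertable A w l) :
    degreeIn A w {v | v ∈ l} ≤ l.length + 1 := by
  classical
  have hchain : l.IsChain fun a b => ¬ (A a w ∧ A w b) :=
    List.isChain_iff_forall_rel_of_append_cons_cons.2
      fun a b l₁ l₂ hl hab => h ⟨l₁, a, b, l₂, hl, hab⟩
  -- The bound improves by one when the first vertex receives no arc from `w`, which is the case
  -- for the tail of a path whose first vertex sends an arc to `w`.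
  suffices degreeIn A w {v | v ∈ l} ≤ l.length + 1 ∧
      ((∀ b ∈ l.head?, ¬ A w b) → degreeIn A w {v | v ∈ l} ≤ l.length) from this.1
  clear h
  induction l with
  | nil => simp [degreeIn]
  | cons a l ih =>
    obtain ⟨hhead, htail⟩ := List.isChain_cons.1 hchain
    obtain ⟨ih, ih_head⟩ := ih htail
    have hunion : {v | v ∈ a :: l} = {a} ∪ {v | v ∈ l} := by ext v; simp
    have hle := degreeIn_union_le (A := A) w {a} {v | v ∈ l}
    rw [← hunion, degreeIn_singleton] at hle
    by_cases haw : A a w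
    · have htail_le := ih_head fun b hb hwb => hhead b hb ⟨haw, hwb⟩
      refine ⟨?_, fun hwa => ?_⟩
      · split_ifs at hle <;> simp only [List.length_cons] <;> omega
      · have hwa : ¬ A w a := hwa a rfl
        simp only [haw, hwa, if_true, if_false, List.length_cons] at hle ⊢
        omega
    · refine ⟨?_, fun hwa => ?_⟩
      · split_ifs at hle <;> simp only [List.length_cons] <;> omega
      · have hwa : ¬ A w a := hwa a rfl
        simp only [haw, hwa, if_false, List.length_cons] at hle ⊢
        omega

end Degree

section DirectedCycle

variable {V : Type*} {A : V → V → Prop}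

/-- A directed cycle, up to rotation, through at least two vertices. -/
structure IsDirectedCycle (A : V → V → Prop) (C : Cycle V) : Prop where
  nodup : C.Nodup
  nontrivial : C.Nontrivial
  chain : C.Chain A

theorem ncard_setOf_mem_list {l : List V} (h : l.Nodup) : {v | v ∈ l}.ncard = l.length := by
  classical
  rw [← List.toFinset_card_of_nodup h, ← Set.ncard_coe_finset, List.coe_toFinset]

theorem ncard_setOf_mem_cycle {C : Cycle V} (h : C.Nodup) : {v | v ∈ C}.ncard = C.length := by
  induction C using Quotient.inductionOn with
  | h l => exact ncard_setOf_mem_list h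

theorem IsStrong.swap (h : IsStrong A) : IsStrong (Function.swap A) :=
  fun x y => Relation.reflTransGen_swap.2 (h y x)

theorem cycleChain_coe_iff {l : List V} :
    Cycle.Chain A l ↔ l.IsChain A ∧ ∀ a ∈ l.getLast?, ∀ b ∈ l.head?, A a b := by
  cases l with
  | nil => simp
  | cons a l =>
    rw [Cycle.chain_coe_cons, ← List.cons_append, List.isChain_append]
    simp

theorem cycleChain_append_iff {l m : List V} (hl : l ≠ []) (hm : m ≠ []) :
    Cycle.Chain A ↑(l ++ m) ↔ (l.IsChain A ∧ m.IsChain A) ∧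
      (∀ a ∈ l.getLast?, ∀ b ∈ m.head?, A a b) ∧ ∀ a ∈ m.getLast?, ∀ b ∈ l.head?, A a b := by
  rw [cycleChain_coe_iff, List.isChain_append, List.getLast?_append_of_ne_nil _ hm,
    List.head?_append_of_ne_nil _ hl]
  tauto

theorem cycleChain_swap_reverse {C : Cycle V} (h : C.Chain A) :
    C.reverse.Chain (Function.swap A) := by
  induction C using Quotient.inductionOn with
  | h l =>
    obtain ⟨hchain, hclose⟩ := cycleChain_coe_iff.1 h
    refine cycleChain_coe_iff.2 ⟨List.isChain_reverse.2 hchain, ?_⟩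
    rw [List.getLast?_reverse, List.head?_reverse]
    exact fun a ha b hb => hclose b hb a ha

theorem cycle_coe_append_comm (l m : List V) : ((l ++ m : List V) : Cycle V) = (m ++ l : List V) :=
  Cycle.coe_eq_coe.2 List.isRotated_append

theorem exists_cycle_segment {C : Cycle V} {a b : V} (ha : a ∈ C) (hb : b ∈ C) :
    ∃ P S : List V, ((P ++ S : List V) : Cycle V) = C ∧
      P.head? = some a ∧ P.getLast? = some b := by
  induction C using Quotient.inductionOn with
  | h l =>
    obtain ⟨l₁, l₂, rfl⟩ := List.append_of_mem (Cycle.mem_coe_iff.1 hb)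
    have ha' : a ∈ l₂ ++ (l₁ ++ [b]) := by
      have := Cycle.mem_coe_iff.1 ha
      simp only [List.mem_append, List.mem_cons, List.not_mem_nil, or_false] at this ⊢
      tauto
    obtain ⟨S, P, hSP⟩ := List.append_of_mem ha'
    refine ⟨a :: P, S, ?_, rfl, ?_⟩
    · rw [cycle_coe_append_comm, ← hSP, cycle_coe_append_comm]
      simp
    · rw [← List.getLast?_append_of_ne_nil S (List.cons_ne_nil a P), ← hSP,
        List.getLast?_append_of_ne_nil _ (by simp), List.getLast?_concat]

theorem exists_path_into {T : Set V} {y c : V} (h : Relation.ReflTransGen A y c) (hc : c ∈ T)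
    (hy : y ∉ T) : ∃ R : List V, ∃ c' ∈ T, (y :: R).Nodup ∧ (y :: R ++ [c']).IsChain A ∧
      ∀ v ∈ y :: R, v ∉ T := by
  induction h using Relation.ReflTransGen.head_induction_on with
  | refl => exact absurd hc hy
  | @head y y' hyy' _ ih =>
    by_cases hy' : y' ∈ T
    · exact ⟨[], y', hy', by simp, by simpa using hyy', by simpa using hy⟩
    obtain ⟨R, c', hc', hnodup, hchain, hR⟩ := ih hy'
    by_cases hyR : y ∈ y' :: R
    · obtain ⟨l₁, l₂, hl⟩ := List.append_of_mem hyR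
      rw [hl] at hnodup hchain hR
      refine ⟨l₂, c', hc', hnodup.of_append_right, ?_, fun v hv => hR v (by simp_all)⟩
      rw [List.append_assoc] at hchain
      exact hchain.right_of_append
    · exact ⟨y' :: R, c', hc', List.nodup_cons.2 ⟨hyR, hnodup⟩,
        List.isChain_cons_cons.2 ⟨hyy', hchain⟩, List.forall_mem_cons.2 ⟨hy, hR⟩⟩

theorem exists_isDirectedCycle [Nontrivial V] (hirr : ∀ v, ¬ A v v) (hstrong : IsStrong A) :
    ∃ C, IsDirectedCycle A C := by
  obtain ⟨a, b, hab⟩ := exists_pair_ne V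
  obtain ⟨y, hay, -⟩ := (hstrong a b).cases_head.resolve_left hab
  have hya : y ≠ a := by
    rintro rfl
    exact hirr y hay
  obtain ⟨R, c, rfl, hnodup, hchain, hR⟩ := exists_path_into (T := {a}) (hstrong y a) rfl hya
  refine ⟨(c :: y :: R : List V), ?_, ⟨y, c, hya, by simp, by simp⟩, ?_⟩
  · exact List.nodup_cons.2 ⟨fun hc => hR c hc rfl, hnodup⟩
  · exact (Cycle.chain_coe_cons A c _).2 (List.isChain_cons_cons.2 ⟨hay, hchain⟩)

theorem IsDirectedCycle.exists_mem_ne {C : Cycle V} (h : IsDirectedCycle A C) (z : V) :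
    ∃ s ∈ C, s ≠ z := by
  obtain ⟨a, b, hab, ha, hb⟩ := h.nontrivial
  by_cases haz : a = z
  · exact ⟨b, hb, fun hbz => hab (haz.trans hbz.symm)⟩
  · exact ⟨a, ha, haz⟩

theorem IsDirectedCycle.exists_isCycle {C : Cycle V} (h : IsDirectedCycle A C) :
    ∃ c : Fin C.length → V, IsCycle A c := by
  have hlen := Cycle.length_nontrivial h.nontrivial
  induction C using Quotient.inductionOn with
  | h l =>
    obtain ⟨hchain, hclose⟩ := cycleChain_coe_iff.1 h.chain
    refine ⟨l.get, hlen, List.nodup_iff_injective_get.1 h.nodup, fun ⟨i, hi⟩ => ?_⟩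
    change i < l.length at hi
    change A l[i] (l[(i + 1) % l.length]'(Nat.mod_lt _ (by omega)))
    obtain hi' | hi' : i + 1 < l.length ∨ i + 1 = l.length := by omega
    · simpa [Nat.mod_eq_of_lt hi'] using List.isChain_iff_getElem.1 hchain i hi'
    · have hlast : l[i] ∈ l.getLast? := by simp [List.getLast?_eq_getElem?, ← hi']
      exact hclose _ hlast _ (by simp [hi', List.head?_eq_getElem?])

theorem isHamiltonian_of_isCycle [Fintype V] {c : Fin (Fintype.card V) → V} (h : IsCycle A c) :
    IsHamiltonian A :=
  ⟨c, h, ((Fintype.bijective_iff_injective_and_card c).2 ⟨h.2.1, by simp⟩).2⟩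

end DirectedCycle


section OptimalCycle

variable {V : Type*} {A : V → V → Prop} {z : V}

/-- The value by which cycles are compared: first the set of their vertices other than `z`, then the
set of all their vertices, both ordered by inclusion. -/
def cycleRank (z : V) (C : Cycle V) : Set V ×ₗ Set V :=
  toLex ({v | v ∈ C} \ {z}, {v | v ∈ C})

/-- A directed cycle of maximal `cycleRank`. -/
def IsOptimalCycle (A : V → V → Prop) (z : V) (C : Cycle V) : Prop :=
  MaximalFor (IsDirectedCycle A) (cycleRank z) C

theorem exists_isOptimalCycle [Finite V] [Nontrivial V] (hirr : ∀ v, ¬ A v v)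
    (hstrong : IsStrong A) (z : V) : ∃ C, IsOptimalCycle A z C :=
  have : Finite (Set V ×ₗ Set V) := Finite.of_equiv _ toLex
  exists_maximalFor_of_wellFoundedGT _ _ (exists_isDirectedCycle hirr hstrong)

namespace IsOptimalCycle

variable {C C' : Cycle V}

theorem mem_of_forall_ne_mem (h : IsOptimalCycle A z C) (hC' : IsDirectedCycle A C')
    (hsub : ∀ v ∈ C, v ≠ z → v ∈ C') {v : V} (hv : v ∈ C') (hvz : v ≠ z) : v ∈ C := by
  by_contra hvC
  have hlt : cycleRank z C < cycleRank z C' :=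
    Prod.Lex.toLex_lt_toLex.2 <| .inl <| Set.ssubset_iff_exists.2
      ⟨fun u hu => ⟨hsub u hu.1 hu.2, hu.2⟩, v, ⟨hv, hvz⟩, fun hv' => hvC hv'.1⟩
  exact (h.2 hC' hlt.le).not_gt hlt

theorem mem_of_forall_mem (h : IsOptimalCycle A z C) (hC' : IsDirectedCycle A C')
    (hsub : ∀ v ∈ C, v ∈ C') {v : V} (hv : v ∈ C') : v ∈ C := by
  have hdiff : {u | u ∈ C} \ {z} ⊆ {u | u ∈ C'} \ {z} := fun u hu => ⟨hsub u hu.1, hu.2⟩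
  have hle : cycleRank z C ≤ cycleRank z C' := Prod.Lex.toLex_mono ⟨hdiff, hsub⟩
  rcases Prod.Lex.toLex_le_toLex.1 (h.2 hC' hle) with hlt | heq
  · exact absurd hdiff hlt.not_ge
  · exact heq.2 hv

theorem not_arc_of_arc {l : List V} (h : IsOptimalCycle A z l) {a w b : V}
    (ha : a ∈ l.getLast?) (hb : b ∈ l.head?) (hw : w ∉ l) (haw : A a w) : ¬ A w b := by
  intro hwb
  have hcycle : IsDirectedCycle A (w :: l : List V) := by
    refine ⟨List.nodup_cons.2 ⟨hw, h.1.nodup⟩, ?_, ?_⟩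
    · exact ⟨w, a, (ne_of_mem_of_not_mem (List.mem_of_getLast? ha) hw).symm, by simp,
        by simp [List.mem_of_getLast? ha]⟩
    · refine cycleChain_coe_iff.2 ⟨List.isChain_cons.2 ⟨?_, (cycleChain_coe_iff.1 h.1.chain).1⟩, ?_⟩
      · rintro c hc
        obtain rfl := Option.mem_unique hb hc
        exact hwb
      · simp_all [List.getLast?_cons]
  exact hw (h.mem_of_forall_mem hcycle (fun v hv => List.mem_cons_of_mem w hv) List.mem_cons_self)

theorem not_isInsertable {P S : List V} {w : V} (h : IsOptimalCycle A z (P ++ S : List V))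
    (hw : w ∉ P ++ S) : ¬ IsInsertable A w P := by
  rintro ⟨l₁, a, b, l₂, rfl, haw, hwb⟩
  have hrot : ((l₁ ++ a :: b :: l₂ ++ S : List V) : Cycle V) = (b :: l₂ ++ S ++ (l₁ ++ [a])) := by
    rw [cycle_coe_append_comm (b :: l₂ ++ S)]
    simp
  rw [hrot] at h
  have hlast : a ∈ (b :: l₂ ++ S ++ (l₁ ++ [a])).getLast? := by
    rw [← List.append_assoc, List.getLast?_concat]
    rfl
  exact h.not_arc_of_arc hlast rfl (by simp_all) haw hwb

end IsOptimalCycle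

end OptimalCycle

section Bypass

variable {V : Type*} {A : V → V → Prop} {z : V} {C : Cycle V} {P S R : List V}

/-- The path `R` avoids the directed cycle `C`, contains a vertex other than `z`, and leads from the
end of the segment `P` of `C` back to its beginning, so that it bypasses the complementary
segment `S`. -/
structure IsBypass (A : V → V → Prop) (z : V) (C : Cycle V) (P S R : List V) : Prop where
  isDirectedCycle : IsDirectedCycle A C
  coe_append : ((P ++ S : List V) : Cycle V) = C
  segment_ne_nil : P ≠ []
  chain : Cycle.Chain A (P ++ R : List V)
  nodup : R.Nodup
  notMem : ∀ v ∈ R, v ∉ C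
  exists_ne : ∃ v ∈ R, v ≠ z

/-- A bypass for which the bypassed segment `S` is as short as possible. -/
structure IsShortestBypass (A : V → V → Prop) (z : V) (C : Cycle V) (P S R : List V) : Prop
    extends IsBypass A z C P S R where
  length_le : ∀ P' S' R', IsBypass A z C P' S' R' → S.length ≤ S'.length

theorem IsDirectedCycle.swap (h : IsDirectedCycle A C) :
    IsDirectedCycle (Function.swap A) C.reverse :=
  ⟨Cycle.nodup_reverse_iff.2 h.nodup, Cycle.nontrivial_reverse_iff.2 h.nontrivial,
    cycleChain_swap_reverse h.chain⟩

namespace IsBypass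

theorem swap (h : IsBypass A z C P S R) :
    IsBypass (Function.swap A) z C.reverse P.reverse S.reverse R.reverse where
  isDirectedCycle := h.isDirectedCycle.swap
  coe_append := by
    rw [cycle_coe_append_comm, ← List.reverse_append, ← Cycle.reverse_coe, h.coe_append]
  segment_ne_nil := by simpa using h.segment_ne_nil
  chain := by
    rw [cycle_coe_append_comm, ← List.reverse_append, ← Cycle.reverse_coe]
    exact cycleChain_swap_reverse h.chain
  nodup := List.nodup_reverse.2 h.nodup
  notMem := by simpa using h.notMem
  exists_ne := by simpa using h.exists_ne

theorem bypass_ne_nil (h : IsBypass A z C P S R) : R ≠ [] := by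
  obtain ⟨v, hv, -⟩ := h.exists_ne
  exact List.ne_nil_of_mem hv

theorem nodup_append (h : IsBypass A z C P S R) : (P ++ S).Nodup := by
  rw [← Cycle.nodup_coe_iff, h.coe_append]
  exact h.isDirectedCycle.nodup

theorem isChain_segment (h : IsBypass A z C P S R) : P.IsChain A :=
  ((cycleChain_append_iff h.segment_ne_nil h.bypass_ne_nil).1 h.chain).1.1

theorem isChain_bypass (h : IsBypass A z C P S R) : R.IsChain A :=
  ((cycleChain_append_iff h.segment_ne_nil h.bypass_ne_nil).1 h.chain).1.2

theorem mem_iff (h : IsBypass A z C P S R) {v : V} : v ∈ C ↔ v ∈ P ++ S := by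
  rw [← h.coe_append, Cycle.mem_coe_iff]

theorem not_head_last (h : IsBypass A z C P S R) :
    ¬ (R.head? = some z ∧ R.getLast? = some z) := by
  rintro ⟨hhead, hlast⟩
  obtain ⟨v, hv, hvz⟩ := h.exists_ne
  cases R with
  | nil => simp at hv
  | cons a R =>
    obtain rfl : a = z := by simpa using hhead
    cases R with
    | nil => simp_all
    | cons b R =>
      rw [List.getLast?_cons_cons] at hlast
      exact (List.nodup_cons.1 h.nodup).1 (List.mem_of_getLast? hlast)

theorem redirect (h : IsBypass A z C P S R) {R' : List V} {w s : V} (hnodup : R'.Nodup)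
    (hchain : R'.IsChain A) (hnotMem : ∀ v ∈ R', v ∉ C) (hne : ∃ v ∈ R', v ≠ z)
    (hhead : R'.head? = R.head?) (hlast : R'.getLast? = some w) (hs : s ∈ S) (hws : A w s) :
    ∃ P' S', IsBypass A z C P' S' R' ∧ S'.length < S.length := by
  obtain ⟨S₁, S₂, rfl⟩ := List.append_of_mem hs
  have hR' : R' ≠ [] := by
    rintro rfl
    simp at hlast
  -- Returning to `C` at `s`, the path `R'` bypasses only the part `S₁` of `S` before `s`.
  have hC : ((s :: S₂ ++ P ++ S₁ : List V) : Cycle V) = C := by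
    rw [← h.coe_append, List.append_assoc, cycle_coe_append_comm, List.append_assoc]
  have hPR := (cycleChain_append_iff h.segment_ne_nil h.bypass_ne_nil).1 h.chain
  have hP' : (s :: S₂ ++ P).IsChain A := by
    have := h.isDirectedCycle.chain
    rw [← hC, cycleChain_coe_iff] at this
    exact this.1.left_of_append
  refine ⟨s :: S₂ ++ P, S₁, ⟨h.isDirectedCycle, hC, by simp, ?_, hnodup, hnotMem, hne⟩, ?_⟩
  · rw [cycleChain_append_iff (by simp) hR', hhead,
      List.getLast?_append_of_ne_nil _ h.segment_ne_nil, hlast]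
    refine ⟨⟨hP', hchain⟩, hPR.2.1, ?_⟩
    rintro _ ⟨⟩ _ ⟨⟩
    exact hws
  · simp only [List.length_append, List.length_cons]
    omega

theorem exists_isShortestBypass (h : IsBypass A z C P S R) :
    ∃ P S R, IsShortestBypass A z C P S R := by
  obtain ⟨⟨P, S, R⟩, hb, hmin⟩ := exists_minimalFor_of_wellFoundedLT
    (fun t : List V × List V × List V => IsBypass A z C t.1 t.2.1 t.2.2)
    (fun t => t.2.1.length) ⟨(P, S, R), h⟩
  exact ⟨P, S, R, hb, fun P' S' R' h' => (le_total _ _).elim id (hmin (j := (P', S', R')) h')⟩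

end IsBypass

theorem exists_isBypass_of_arc (hC : IsDirectedCycle A C) (hstrong : IsStrong A) {c y : V}
    (hc : c ∈ C) (hy : y ∉ C) (hyz : y ≠ z) (hcy : A c y) : ∃ P S R, IsBypass A z C P S R := by
  obtain ⟨R, c', hc', hnodup, hchain, hR⟩ :=
    exists_path_into (T := {v | v ∈ C}) (hstrong y c) hc hy
  obtain ⟨P, S, hPS, hhead, hlast⟩ := exists_cycle_segment hc' hc
  obtain ⟨hchainR, -, hRc'⟩ := List.isChain_append.1 hchain
  have hP : P ≠ [] := by
    rintro rfl
    simp at hhead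
  have hchainP : P.IsChain A := by
    have := hC.chain
    rw [← hPS, cycleChain_coe_iff] at this
    exact this.1.left_of_append
  refine ⟨P, S, y :: R, hC, hPS, hP, ?_, hnodup, hR, y, List.mem_cons_self, hyz⟩
  refine (cycleChain_append_iff hP (List.cons_ne_nil y R)).2 ⟨⟨hchainP, hchainR⟩, ?_, ?_⟩
  · simpa [hlast] using hcy
  · simpa [hhead] using hRc'

theorem exists_isBypass_of_arc_into (hC : IsDirectedCycle A C) (hstrong : IsStrong A) {c y : V}
    (hc : c ∈ C) (hy : y ∉ C) (hyz : y ≠ z) (hyc : A y c) : ∃ P S R, IsBypass A z C P S R := by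
  obtain ⟨P, S, R, h⟩ := exists_isBypass_of_arc hC.swap hstrong.swap (Cycle.mem_reverse_iff.2 hc)
    (mt Cycle.mem_reverse_iff.1 hy) hyz hyc
  exact ⟨_, _, _, C.reverse_reverse ▸ h.swap⟩

theorem exists_isBypass [Finite V] (hirr : ∀ v, ¬ A v v) (hdeg : IsMeynielOff A z)
    (hC : IsDirectedCycle A C) (hstrong : IsStrong A) {x : V} (hx : x ∉ C) (hxz : x ≠ z) :
    ∃ P S R, IsBypass A z C P S R := by
  by_contra hnone
  have hno_arc {c y : V} (hc : c ∈ C) (hy : y ∉ C) (hyz : y ≠ z) : ¬ A c y ∧ ¬ A y c :=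
    ⟨fun hcy => hnone (exists_isBypass_of_arc hC hstrong hc hy hyz hcy),
      fun hyc => hnone (exists_isBypass_of_arc_into hC hstrong hc hy hyz hyc)⟩
  obtain ⟨s, hs, hsz⟩ := hC.exists_mem_ne z
  have hxs : x ≠ s := (ne_of_mem_of_not_mem hs hx).symm
  obtain ⟨hsx, hxs'⟩ := hno_arc hs hx hxz
  have hmid_xs : midVertices A Set.univ x s ⊆ {z} := fun w ⟨_, hxw, hws⟩ =>
    by_contra fun hwz => (hno_arc hs (fun hw => (hno_arc hw hx hxz).2 hxw) hwz).2 hws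
  have hmid_sx : midVertices A Set.univ s x ⊆ {z} := fun w ⟨_, hsw, hwx⟩ =>
    by_contra fun hwz => (hno_arc hs (fun hw => (hno_arc hw hx hxz).1 hwx) hwz).1 hsw
  have hle := degreeIn_add_degreeIn_le hirr hxs' hsx Set.univ
  have hmid_xs_le := Set.ncard_le_ncard hmid_xs
  have hmid_sx_le := Set.ncard_le_ncard hmid_sx
  have hcard : (Set.univ \ {x, s} : Set V).ncard + 2 = Nat.card V := by
    rw [← Set.ncard_pair hxs, Set.ncard_sdiff_add_ncard_of_subset (Set.subset_univ _),
      Set.ncard_univ]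
  have := hdeg x s hxz hsz hxs hxs' hsx
  rw [degreeIn_univ, degreeIn_univ] at hle
  rw [Set.ncard_singleton] at hmid_xs_le hmid_sx_le
  omega

namespace IsShortestBypass

theorem swap (h : IsShortestBypass A z C P S R) :
    IsShortestBypass (Function.swap A) z C.reverse P.reverse S.reverse R.reverse where
  toIsBypass := h.toIsBypass.swap
  length_le P' S' R' h' := by
    have := h.length_le _ _ _ (C.reverse_reverse ▸ h'.swap)
    simpa using this

theorem not_arc_of_path (h : IsShortestBypass A z C P S R) {R' : List V} {w s : V}
    (hnodup : R'.Nodup) (hchain : R'.IsChain A) (hnotMem : ∀ v ∈ R', v ∉ C)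
    (hne : ∃ v ∈ R', v ≠ z) (hhead : R'.head? = R.head?) (hlast : R'.getLast? = some w)
    (hs : s ∈ S) : ¬ A w s := by
  intro hws
  obtain ⟨P', S', h', hlt⟩ := h.redirect hnodup hchain hnotMem hne hhead hlast hs hws
  exact (h.length_le _ _ _ h').not_gt hlt

theorem not_arc_of_mem (h : IsShortestBypass A z C P S R) {v s : V} (hv : v ∈ R)
    (hz : v ≠ z ∨ R.head? ≠ some z) (hs : s ∈ S) : ¬ A v s := by
  intro hvs
  have hchain := h.isChain_bypass
  obtain ⟨R₁, R₂, rfl⟩ := List.append_of_mem hv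
  have hsplit : R₁ ++ v :: R₂ = R₁ ++ [v] ++ R₂ := by simp
  rw [hsplit] at h hchain hz
  have hhead : (R₁ ++ [v]).head? = (R₁ ++ [v] ++ R₂).head? :=
    (List.head?_append_of_ne_nil _ (by simp)).symm
  have hne : ∃ u ∈ R₁ ++ [v], u ≠ z := by
    rcases hz with hvz | hz
    · exact ⟨v, by simp, hvz⟩
    · refine ⟨(R₁ ++ [v]).head (by simp), List.head_mem _, fun hu => hz ?_⟩
      rw [← hhead, List.head?_eq_some_head (by simp), hu]
  exact h.not_arc_of_path h.nodup.of_append_left hchain.left_of_append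
    (fun u hu => h.notMem u (List.mem_append_left _ hu)) hne hhead List.getLast?_concat hs hvs

theorem not_arc_of_arc (h : IsShortestBypass A z C P S R) {x w s : V} (hx : x ∈ R) (hxz : x ≠ z)
    (hxw : A x w) (hwC : w ∉ C) (hwR : w ∉ R) (hs : s ∈ S) : ¬ A w s := by
  intro hws
  have hchain := h.isChain_bypass
  obtain ⟨R₁, R₂, rfl⟩ := List.append_of_mem hx
  have hsplit : R₁ ++ x :: R₂ = R₁ ++ [x] ++ R₂ := by simp
  rw [hsplit] at h hchain hwR
  have hne : R₁ ++ [x] ≠ [] := by simp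
  have hnodup : (R₁ ++ [x] ++ [w]).Nodup := by
    rw [← List.concat_eq_append (as := R₁ ++ [x])]
    exact h.nodup.of_append_left.concat fun hw => hwR (List.mem_append_left _ hw)
  have hchain' : (R₁ ++ [x] ++ [w]).IsChain A :=
    List.isChain_append.2 ⟨hchain.left_of_append, by simp, by simpa using hxw⟩
  have hnotMem : ∀ v ∈ R₁ ++ [x] ++ [w], v ∉ C := by
    intro v hv
    rcases List.mem_append.1 hv with hv | hv
    · exact h.notMem v (List.mem_append_left _ hv)
    · rwa [List.mem_singleton.1 hv]
  have hhead : (R₁ ++ [x] ++ [w]).head? = (R₁ ++ [x] ++ R₂).head? := by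
    rw [List.head?_append_of_ne_nil _ hne, List.head?_append_of_ne_nil _ hne]
  exact h.not_arc_of_path hnodup hchain' hnotMem ⟨x, by simp, hxz⟩ hhead
    List.getLast?_concat hs hws

theorem midVertices_subset (h : IsShortestBypass A z C P S R) {x s : V} (hx : x ∈ R)
    (hxz : x ≠ z) (hs : s ∈ S) :
    midVertices A {v | v ∈ C}ᶜ x s ⊆ {w | w = z ∧ A z s ∧ R.head? = some z} := by
  rintro w ⟨hwC, hxw, hws⟩
  have hwR : w ∈ R := by
    by_contra hwR
    exact h.not_arc_of_arc hx hxz hxw hwC hwR hs hws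
  obtain ⟨rfl, hhead⟩ : w = z ∧ R.head? = some z := by
    by_contra hz
    exact h.not_arc_of_mem hwR (not_and_or.1 hz) hs hws
  exact ⟨rfl, hws, hhead⟩

theorem not_arc_into_of_mem (h : IsShortestBypass A z C P S R) {x s : V} (hx : x ∈ R)
    (hxz : x ≠ z) (hs : s ∈ S) : ¬ A s x :=
  h.swap.not_arc_of_mem (List.mem_reverse.2 hx) (.inl hxz) (List.mem_reverse.2 hs)

theorem midVertices_into_subset (h : IsShortestBypass A z C P S R) {x s : V} (hx : x ∈ R)
    (hxz : x ≠ z) (hs : s ∈ S) :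
    midVertices A {v | v ∈ C}ᶜ s x ⊆ {w | w = z ∧ A s z ∧ R.getLast? = some z} := by
  rintro w ⟨hwC, hsw, hwx⟩
  have := h.swap.midVertices_subset (List.mem_reverse.2 hx) hxz (List.mem_reverse.2 hs)
    ⟨mt Cycle.mem_reverse_iff.1 hwC, hwx, hsw⟩
  rwa [List.head?_reverse] at this

end IsShortestBypass

end Bypass

section Absorption

variable {V : Type*} {A : V → V → Prop} {z : V} {C : Cycle V} {P S Q R : List V}

/-- The path `Q` arises from the path `P` by absorbing vertices of `S`, with the same ends. -/
structure IsAbsorption (A : V → V → Prop) (P S Q : List V) : Prop where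
  nodup : Q.Nodup
  chain : Q.IsChain A
  head?_eq : Q.head? = P.head?
  getLast?_eq : Q.getLast? = P.getLast?
  subset : P ⊆ Q
  subset_append : Q ⊆ P ++ S

/-- An absorption after which no further vertex of `S` can be inserted. -/
structure IsFullAbsorption (A : V → V → Prop) (P S Q : List V) : Prop
    extends IsAbsorption A P S Q where
  not_isInsertable : ∀ s ∈ S, s ∉ Q → ¬ IsInsertable A s Q

theorem IsAbsorption.exists_insert (h : IsAbsorption A P S Q) {s : V} (hs : s ∈ S) (hsQ : s ∉ Q)
    (hins : IsInsertable A s Q) : ∃ Q', IsAbsorption A P S Q' ∧ s ∈ Q' ∧ Q ⊆ Q' := by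
  obtain ⟨l₁, a, b, l₂, rfl, has, hsb⟩ := hins
  have hperm : (l₁ ++ a :: s :: b :: l₂).Perm (s :: (l₁ ++ a :: b :: l₂)) := by
    simpa using List.perm_middle (a := s) (l₁ := l₁ ++ [a]) (l₂ := b :: l₂)
  have hsub : l₁ ++ a :: b :: l₂ ⊆ l₁ ++ a :: s :: b :: l₂ := fun v hv =>
    hperm.mem_iff.2 (List.mem_cons_of_mem s hv)
  have hnodup := hperm.nodup_iff.2 (List.nodup_cons.2 ⟨hsQ, h.nodup⟩)
  refine ⟨l₁ ++ a :: s :: b :: l₂, ⟨hnodup, ?_, ?_, ?_,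
    fun v hv => hsub (h.subset hv), fun v hv => ?_⟩, by simp, hsub⟩
  · obtain ⟨hl₁, hl₂, hlink⟩ := List.isChain_append.1 h.chain
    exact List.isChain_append.2 ⟨hl₁, List.isChain_cons_cons.2
      ⟨has, List.isChain_cons_cons.2 ⟨hsb, hl₂.tail⟩⟩, hlink⟩
  · simpa using h.head?_eq
  · simpa using h.getLast?_eq
  · rcases List.mem_cons.1 (hperm.mem_iff.1 hv) with rfl | hv
    · exact List.mem_append_right P hs
    · exact h.subset_append hv

theorem exists_isFullAbsorption [Finite V] (hnodup : P.Nodup) (hchain : P.IsChain A)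
    (S : List V) : ∃ Q, IsFullAbsorption A P S Q := by
  obtain ⟨Q, hQ, hmax⟩ := exists_maximalFor_of_wellFoundedGT (IsAbsorption A P S)
    (fun Q => {v | v ∈ Q})
    ⟨P, hnodup, hchain, rfl, rfl, List.Subset.refl P, List.subset_append_left P S⟩
  refine ⟨Q, hQ, fun s hs hsQ hins => ?_⟩
  obtain ⟨Q', hQ', hsQ', hsub⟩ := hQ.exists_insert hs hsQ hins
  exact hsQ (hmax hQ' hsub hsQ')

theorem IsOptimalCycle.exists_notMem_of_isAbsorption (hopt : IsOptimalCycle A z C)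
    (h : IsBypass A z C P S R) (hQ : IsAbsorption A P S Q) : ∃ s ∈ S, s ∉ Q ∧ s ≠ z := by
  by_contra! hall
  have hQC : ∀ v ∈ Q, v ∈ C := fun v hv => h.mem_iff.2 (hQ.subset_append hv)
  have hQ_ne : Q ≠ [] := by
    rw [Ne, ← List.head?_eq_none_iff, hQ.head?_eq, List.head?_eq_none_iff]
    exact h.segment_ne_nil
  have hPR := (cycleChain_append_iff h.segment_ne_nil h.bypass_ne_nil).1 h.chain
  have hdisj : Q.Disjoint R := fun v hvQ hvR => h.notMem v hvR (hQC v hvQ)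
  have hcycle : IsDirectedCycle A (Q ++ R : List V) := by
    refine ⟨hQ.nodup.append h.nodup hdisj, ?_, ?_⟩
    · obtain ⟨a, ha⟩ := List.exists_mem_of_ne_nil Q hQ_ne
      obtain ⟨b, hb⟩ := List.exists_mem_of_ne_nil R h.bypass_ne_nil
      exact ⟨a, b, fun hab => hdisj ha (hab ▸ hb), by simp [ha], by simp [hb]⟩
    · rw [cycleChain_append_iff hQ_ne h.bypass_ne_nil, hQ.head?_eq, hQ.getLast?_eq]
      exact ⟨⟨hQ.chain, hPR.1.2⟩, hPR.2⟩
  have hsub : ∀ v ∈ C, v ≠ z → v ∈ ((Q ++ R : List V) : Cycle V) := by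
    intro v hv hvz
    refine Cycle.mem_coe_iff.2 (List.mem_append_left R ?_)
    rcases List.mem_append.1 (h.mem_iff.1 hv) with hvP | hvS
    · exact hQ.subset hvP
    · by_contra hvQ
      exact hvz (hall v hvS hvQ)
  obtain ⟨x, hx, hxz⟩ := h.exists_ne
  exact h.notMem x hx (hopt.mem_of_forall_ne_mem hcycle hsub (by simp [hx]) hxz)

namespace IsOptimalCycle

theorem degreeIn_le_of_mem_bypass (hopt : IsOptimalCycle A z C)
    (h : IsShortestBypass A z C P S R) {x : V} (hx : x ∈ R) (hxz : x ≠ z) :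
    degreeIn A x {v | v ∈ C} ≤ P.length + 1 := by
  have hC : {v | v ∈ C} = {v | v ∈ P} ∪ {v | v ∈ S} := by
    ext v
    simp [h.mem_iff]
  have hS : degreeIn A x {v | v ∈ S} = 0 := degreeIn_eq_zero fun s hs =>
    ⟨h.not_arc_of_mem hx (.inl hxz) hs, h.not_arc_into_of_mem hx hxz hs⟩
  have hins : ¬ IsInsertable A x P := by
    rw [← h.coe_append] at hopt
    exact hopt.not_isInsertable (mt h.mem_iff.2 (h.notMem x hx))
  calc degreeIn A x {v | v ∈ C} ≤ degreeIn A x {v | v ∈ P} + degreeIn A x {v | v ∈ S} :=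
        hC ▸ degreeIn_union_le x _ _
    _ ≤ P.length + 1 := by
        rw [hS]
        exact degreeIn_le_length_add_one hins

theorem not_arc_of_head (hopt : IsOptimalCycle A z C) (h : IsBypass A z C P S R)
    (hhead : R.head? = some z) {b : V} (hb : b ∈ S.head?) : ¬ A z b := by
  obtain ⟨-, hlink, -⟩ := (cycleChain_append_iff h.segment_ne_nil h.bypass_ne_nil).1 h.chain
  have hz : z ∉ S ++ P := by
    rw [← Cycle.mem_coe_iff, cycle_coe_append_comm, h.coe_append]
    exact h.notMem z (List.mem_of_head? hhead)
  rw [← h.coe_append, cycle_coe_append_comm] at hopt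
  have hlast := List.getLast?_eq_some_getLast h.segment_ne_nil
  refine hopt.not_arc_of_arc (a := P.getLast h.segment_ne_nil) ?_ ?_ hz (hlink _ hlast _ hhead)
  · rw [List.getLast?_append_of_ne_nil _ h.segment_ne_nil, hlast]
    rfl
  · rwa [List.head?_append_of_ne_nil _ (List.ne_nil_of_mem (List.mem_of_head? hb))]

theorem not_arc_of_last (hopt : IsOptimalCycle A z C) (h : IsBypass A z C P S R)
    (hlast : R.getLast? = some z) {a : V} (ha : a ∈ S.getLast?) : ¬ A a z := by
  intro haz
  obtain ⟨-, -, hlink⟩ := (cycleChain_append_iff h.segment_ne_nil h.bypass_ne_nil).1 h.chain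
  have hz : z ∉ P ++ S := mt h.mem_iff.2 (h.notMem z (List.mem_of_getLast? hlast))
  rw [← h.coe_append] at hopt
  have hhead := List.head?_eq_some_head h.segment_ne_nil
  refine hopt.not_arc_of_arc ?_ ?_ hz haz (hlink _ hlast _ hhead)
  · rwa [List.getLast?_append_of_ne_nil _ (List.ne_nil_of_mem (List.mem_of_getLast? ha))]
  · rw [List.head?_append_of_ne_nil _ h.segment_ne_nil, hhead]
    rfl

end IsOptimalCycle

theorem IsFullAbsorption.degreeIn_add_length_lt [Finite V] (hirr : ∀ v, ¬ A v v)
    (hQ : IsFullAbsorption A P S Q) (h : IsBypass A z C P S R) {s : V} (hs : s ∈ S)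
    (hsQ : s ∉ Q) : degreeIn A s {v | v ∈ C} + Q.length < 2 * C.length := by
  have hQC : {v | v ∈ Q} ⊆ {v | v ∈ C} := fun v hv => h.mem_iff.2 (hQ.subset_append hv)
  have hunion := degreeIn_union_le (A := A) s {v | v ∈ Q} ({v | v ∈ C} \ {v | v ∈ Q})
  rw [Set.union_sdiff_cancel hQC] at hunion
  have hinside := degreeIn_le_length_add_one (hQ.not_isInsertable s hs hsQ)
  have hrest := degreeIn_le_two_mul_ncard hirr s ({v | v ∈ C} \ {v | v ∈ Q})
  have hs_mem : s ∈ {v | v ∈ C} \ {v | v ∈ Q} := ⟨h.mem_iff.2 (List.mem_append_right P hs), hsQ⟩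
  have hcard_s := Set.ncard_sdiff_singleton_add_one hs_mem
  have hcard := Set.ncard_sdiff_add_ncard_of_subset hQC
  rw [ncard_setOf_mem_list hQ.nodup, ncard_setOf_mem_cycle h.isDirectedCycle.nodup] at hcard
  omega

open Classical in
theorem IsShortestBypass.degreeIn_compl_add_degreeIn_compl_le [Finite V] (hirr : ∀ v, ¬ A v v)
    (h : IsShortestBypass A z C P S R) {x s : V} (hx : x ∈ R) (hxz : x ≠ z) (hs : s ∈ S) :
    degreeIn A x {v | v ∈ C}ᶜ + degreeIn A s {v | v ∈ C}ᶜ + 2 * C.length + 2 ≤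
      2 * Nat.card V + (if A z s ∧ R.head? = some z then 1 else 0) +
        (if A s z ∧ R.getLast? = some z then 1 else 0) := by
  have ncard_setOf_eq_and (p : Prop) [Decidable p] :
      {w | w = z ∧ p}.ncard = if p then 1 else 0 := by
    split_ifs with hp <;> simp [hp]
  have hxs := Set.ncard_le_ncard (h.midVertices_subset hx hxz hs)
  have hsx := Set.ncard_le_ncard (h.midVertices_into_subset hx hxz hs)
  rw [ncard_setOf_eq_and] at hxs hsx
  have hle := degreeIn_add_degreeIn_le hirr (h.not_arc_of_mem hx (.inl hxz) hs)
    (h.not_arc_into_of_mem hx hxz hs) {v | v ∈ C}ᶜ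
  have hcompl := Set.ncard_add_ncard_compl {v | v ∈ C}
  rw [ncard_setOf_mem_cycle h.isDirectedCycle.nodup] at hcompl
  have hcompl_x := Set.ncard_sdiff_singleton_add_one (s := {v | v ∈ C}ᶜ) (h.notMem x hx)
  have hcompl_xs : ({v | v ∈ C}ᶜ \ {x, s}).ncard ≤ ({v | v ∈ C}ᶜ \ {x}).ncard :=
    Set.ncard_le_ncard (Set.sdiff_subset_sdiff_right (by simp))
  omega

namespace IsOptimalCycle

variable [Finite V]

open Classical in
theorem length_lt (hopt : IsOptimalCycle A z C) (hirr : ∀ v, ¬ A v v) (hdeg : IsMeynielOff A z)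
    (h : IsShortestBypass A z C P S R) (hQ : IsFullAbsorption A P S Q) {s : V} (hs : s ∈ S)
    (hsQ : s ∉ Q) (hsz : s ≠ z) :
    Q.length < P.length + (if A z s ∧ R.head? = some z then 1 else 0) +
        (if A s z ∧ R.getLast? = some z then 1 else 0) := by
  obtain ⟨x, hx, hxz⟩ := h.exists_ne
  have hxs : x ≠ s := by
    rintro rfl
    exact h.notMem x hx (h.mem_iff.2 (List.mem_append_right P hs))
  have hsum := hdeg x s hxz hsz hxs (h.not_arc_of_mem hx (.inl hxz) hs)
    (h.not_arc_into_of_mem hx hxz hs)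
  have degree_le (v : V) :
      degree A v ≤ degreeIn A v {v | v ∈ C} + degreeIn A v {v | v ∈ C}ᶜ := by
    rw [← degreeIn_univ, ← Set.union_compl_self {v | v ∈ C}]
    exact degreeIn_union_le v _ _
  have hx_le := degree_le x
  have hs_le := degree_le s
  have hx_in := hopt.degreeIn_le_of_mem_bypass h hx hxz
  have hs_in := hQ.degreeIn_add_length_lt hirr h.toIsBypass hs hsQ
  have hout := h.degreeIn_compl_add_degreeIn_compl_le hirr hx hxz hs
  omega

/-- As `P ⊆ Q`, the bound `length_lt` forces `Q` to have exactly the vertices of `P`. It then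
applies to every vertex of `S`, and each time one of its two indicator terms must be `1`. -/
theorem arc_of_mem_bypassed (hopt : IsOptimalCycle A z C) (hirr : ∀ v, ¬ A v v)
    (hdeg : IsMeynielOff A z) (h : IsShortestBypass A z C P S R) {t : V} (ht : t ∈ S) :
    A z t ∧ R.head? = some z ∨ A t z ∧ R.getLast? = some z := by
  obtain ⟨Q, hQ⟩ := exists_isFullAbsorption h.nodup_append.of_append_left h.isChain_segment S
  have hsubperm : P.Subperm Q := h.nodup_append.of_append_left.subperm hQ.subset
  have hle := hsubperm.length_le
  have hends := h.not_head_last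
  obtain ⟨s, hs, hsQ, hsz⟩ := hopt.exists_notMem_of_isAbsorption h.toIsBypass hQ.toIsAbsorption
  have hlt_s := hopt.length_lt hirr hdeg h hQ hs hsQ hsz
  have hzR : z ∈ R := by
    by_contra hz
    have hhead : R.head? ≠ some z := fun hz' => hz (List.mem_of_head? hz')
    have hlast : R.getLast? ≠ some z := fun hz' => hz (List.mem_of_getLast? hz')
    simp only [hhead, hlast, and_false, if_false] at hlt_s
    omega
  have hlen : Q.length ≤ P.length := by
    split_ifs at hlt_s with hhead hlast
    · exact absurd ⟨hhead.2, hlast.2⟩ hends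
    all_goals omega
  have hperm : P.Perm Q := hsubperm.perm_of_length_le hlen
  have htQ : t ∉ Q := fun htQ => h.nodup_append.disjoint (hperm.mem_iff.2 htQ) ht
  have htz : t ≠ z := by
    rintro rfl
    exact h.notMem t hzR (h.mem_iff.2 (List.mem_append_right P ht))
  have hlt_t := hopt.length_lt hirr hdeg h hQ ht htQ htz
  by_contra hnone
  rw [not_or] at hnone
  rw [if_neg hnone.1, if_neg hnone.2] at hlt_t
  omega

theorem not_isShortestBypass (hopt : IsOptimalCycle A z C) (hirr : ∀ v, ¬ A v v)
    (hdeg : IsMeynielOff A z) : ¬ IsShortestBypass A z C P S R := by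
  intro h
  obtain ⟨Q, hQ, -⟩ := exists_isFullAbsorption h.nodup_append.of_append_left h.isChain_segment S
  obtain ⟨s, hs, -⟩ := hopt.exists_notMem_of_isAbsorption h.toIsBypass hQ
  have hS : S ≠ [] := List.ne_nil_of_mem hs
  have arc_of_mem {t : V} (ht : t ∈ S) := hopt.arc_of_mem_bypassed hirr hdeg h ht
  have hlast : R.getLast? = some z := by
    refine (arc_of_mem (S.head_mem hS)).elim (fun ⟨hzb, hhead⟩ => ?_) And.right
    exact absurd hzb (hopt.not_arc_of_head h.toIsBypass hhead (List.head?_eq_some_head hS))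
  have hhead : R.head? = some z := by
    refine (arc_of_mem (S.getLast_mem hS)).elim And.right (fun ⟨haz, _⟩ => ?_)
    exact absurd haz (hopt.not_arc_of_last h.toIsBypass hlast (List.getLast?_eq_some_getLast hS))
  exact h.not_head_last ⟨hhead, hlast⟩

theorem mem_of_ne (hopt : IsOptimalCycle A z C) (hirr : ∀ v, ¬ A v v) (hstrong : IsStrong A)
    (hdeg : IsMeynielOff A z) {v : V} (hvz : v ≠ z) : v ∈ C := by
  by_contra hv
  obtain ⟨_, _, _, hb⟩ := exists_isBypass hirr hdeg hopt.1 hstrong hv hvz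
  obtain ⟨_, _, _, h⟩ := hb.exists_isShortestBypass
  exact hopt.not_isShortestBypass hirr hdeg h

end IsOptimalCycle

theorem exists_isDirectedCycle_forall_ne_mem [Finite V] [Nontrivial V] (hirr : ∀ v, ¬ A v v)
    (hstrong : IsStrong A) (hdeg : IsMeynielOff A z) :
    ∃ C, IsDirectedCycle A C ∧ ∀ v, v ≠ z → v ∈ C := by
  obtain ⟨C, hC⟩ := exists_isOptimalCycle hirr hstrong z
  exact ⟨C, hC.1, fun v hv => hC.mem_of_ne hirr hstrong hdeg hv⟩

theorem IsDirectedCycle.length_eq_or_of_forall_ne_mem [Finite V] (h : IsDirectedCycle A C)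
    (hmem : ∀ v, v ≠ z → v ∈ C) : C.length = Nat.card V ∨ C.length = Nat.card V - 1 := by
  rw [← ncard_setOf_mem_cycle h.nodup]
  have hcard := Set.ncard_add_ncard_compl {v | v ∈ C}
  have hcompl : {v | v ∈ C}ᶜ ⊆ {z} := fun v hv => by_contra fun hvz => hv (hmem v hvz)
  have hle := Set.ncard_le_ncard hcompl
  rw [Set.ncard_singleton] at hle
  omega

end Absorption

/-- Let `D` be a strong digraph of order `n ≥ 3` and `z` an arbitrary vertex.  If
`d(x) + d(y) ≥ 2n - 1` for every pair of non-adjacent vertices `x, y ∈ V(D) \ {z}`,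
then `D` is Hamiltonian or contains a directed cycle of length `n - 1`. -/
theorem statement6 {V : Type*} [Fintype V] [DecidableEq V] (A : V → V → Prop)
    (hirr : Irreflexive A)
    (n : ℕ) (hn3 : 3 ≤ n) (hcard : Fintype.card V = n)
    (hstrong : IsStrong A)
    (z : V)
    (hdeg : ∀ x y : V, x ≠ z → y ≠ z → x ≠ y → ¬ A x y → ¬ A y x →
      2 * n - 1 ≤ degree A x + degree A y) :
    IsHamiltonian A ∨ ∃ c : Fin (n - 1) → V, IsCycle A c := by
  rw [← Nat.card_eq_fintype_card] at hcard
  have : Nontrivial V := Finite.one_lt_card_iff_nontrivial.1 (by omega)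
  subst hcard
  obtain ⟨C, hC, hmem⟩ := exists_isDirectedCycle_forall_ne_mem hirr hstrong hdeg
  have hcycle := hC.exists_isCycle
  rcases hC.length_eq_or_of_forall_ne_mem hmem with hlen | hlen <;> rw [hlen] at hcycle
  · rw [Nat.card_eq_fintype_card] at hcycle
    exact .inl (hcycle.elim fun _ => isHamiltonian_of_isCycle)
  · exact .inr hcycle
end

section
/- Let D be a strong digraph of order n ≥ 2. If d(x) + d(y) ≥ 2n−1 for every pair of non-adjacent vertices x and y in D, then D is Hamiltonian. -/
/-!
Let `C` be a longest cycle and suppose it misses some vertex. By strongness some path leaves `C` at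
a vertex `u`, runs outside `C` and returns at a vertex `v`, possibly `v = u`. Choose `C` and this
bypass so that the segment `Q` of `C` strictly between `u` and `v` is as short as possible, and let
`S` be the complementary segment, a path from `v` to `u`. The first vertex `x` of the bypass is not
adjacent to `Q`, since otherwise a shorter segment could be bypassed. Insert vertices of `Q` into
`S` between consecutive vertices for as long as possible. The resulting path `T` misses some
`y ∈ Q`, for otherwise `T` and the bypass would form a longer cycle. Between a path on `k` vertices
and a vertex that cannot be inserted into it there are at most `k + 1` arcs; this applies to `x` and
`S`, and to `y` and `T`. By minimality of `Q`, no path of length two through a vertex outside `C`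
joins `x` and `y`. Adding up, the non-adjacent vertices `x` and `y` satisfy `d(x) + d(y) ≤ 2n - 2`.
-/

namespace Meyniel

variable {V : Type*} {A : V → V → Prop}

section DegreeIn

variable {x y : V} {S T : Set V}

theorem degreeIn_univ (A : V → V → Prop) (x : V) : degreeIn A x Set.univ = degree A x := by
  simp [degreeIn, degree]

theorem degreeIn_union_le (A : V → V → Prop) (x : V) (S T : Set V) :
    degreeIn A x (S ∪ T) ≤ degreeIn A x S + degreeIn A x T := by
  have hout := Set.ncard_union_le {y ∈ S | A x y} {y ∈ T | A x y}
  have hin := Set.ncard_union_le {y ∈ S | A y x} {y ∈ T | A y x}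
  rw [← Set.sep_union] at hout hin
  simp only [degreeIn, Set.mem_union]
  omega

open Classical in
theorem degreeIn_singleton (A : V → V → Prop) (x z : V) :
    degreeIn A x {z} = (if A x z then 1 else 0) + (if A z x then 1 else 0) := by
  have ncard_sep (p : V → Prop) : {y ∈ ({z} : Set V) | p y}.ncard = if p z then 1 else 0 := by
    split_ifs with hz
    · rw [Set.sep_eq_self_iff_mem_true.2 (by simpa using hz), Set.ncard_singleton]
    · rw [Set.sep_eq_empty_iff_mem_false.2 (by simpa using hz), Set.ncard_empty]
  rw [degreeIn, ncard_sep, ncard_sep fun y => A y x]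

theorem degreeIn_eq_of_subset (hST : S ⊆ T) (hout : ∀ z ∈ T \ S, ¬ A x z)
    (hin : ∀ z ∈ T \ S, ¬ A z x) : degreeIn A x T = degreeIn A x S := by
  have sep_eq (p : V → Prop) (hp : ∀ z ∈ T \ S, ¬ p z) : {z ∈ T | p z} = {z ∈ S | p z} :=
    Set.Subset.antisymm
      (fun z ⟨hzT, hz⟩ => ⟨by_contra fun hzS => hp z ⟨hzT, hzS⟩ hz, hz⟩)
      (fun _ ⟨hzS, hz⟩ => ⟨hST hzS, hz⟩)
  rw [degreeIn, degreeIn, sep_eq _ hout, sep_eq (fun z => A z x) hin]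

theorem degreeIn_sdiff_singleton (S : Set V) (hxy : ¬ A x y) (hyx : ¬ A y x) :
    degreeIn A x (S \ {y}) = degreeIn A x S := by
  have eq_of_mem : ∀ z ∈ S \ (S \ {y}), z = y := fun z hz =>
    by_contra fun hzy => hz.2 ⟨hz.1, hzy⟩
  refine (degreeIn_eq_of_subset Set.sdiff_subset ?_ ?_).symm <;>
    exact fun z hz => eq_of_mem z hz ▸ ‹_›

theorem degreeIn_le_two_mul_ncard (A : V → V → Prop) (x : V) (hS : S.Finite) :
    degreeIn A x S ≤ 2 * S.ncard := by
  have hout := Set.ncard_le_ncard (Set.sep_subset S (A x)) hS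
  have hin := Set.ncard_le_ncard (Set.sep_subset S fun y => A y x) hS
  unfold degreeIn
  omega

theorem degreeIn_add_two_mul_ncard_le (hS : S.Finite) (hTS : T ⊆ S) (hy : y ∈ S) (hyT : y ∉ T)
    (hyy : ¬ A y y) : degreeIn A y S + 2 * (T.ncard + 1) ≤ degreeIn A y T + 2 * S.ncard := by
  have hsplit := degreeIn_union_le A y T (S \ T)
  rw [Set.union_sdiff_cancel hTS, ← degreeIn_sdiff_singleton (S \ T) hyy hyy] at hsplit
  have hrest := degreeIn_le_two_mul_ncard A y (S := (S \ T) \ {y}) hS.sdiff.sdiff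
  have hcard := Set.ncard_sdiff_add_ncard_of_subset hTS hS
  have hcard' := Set.ncard_sdiff_singleton_add_one (Set.mem_sdiff_of_mem hy hyT) hS.sdiff
  omega

theorem degreeIn_add_degreeIn_le (hS : S.Finite) (hxy : ∀ z ∈ S, A x z → ¬ A z y)
    (hyx : ∀ z ∈ S, A y z → ¬ A z x) : degreeIn A x S + degreeIn A y S ≤ 2 * S.ncard := by
  have ncard_add_le (p q : V → Prop) (hpq : ∀ z ∈ S, p z → ¬ q z) :
      {z ∈ S | p z}.ncard + {z ∈ S | q z}.ncard ≤ S.ncard := by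
    rw [← Set.ncard_union_eq (Set.disjoint_left.2 fun z hp hq => hpq z hp.1 hp.2 hq.2)
      (hS.sep p) (hS.sep q)]
    exact Set.ncard_le_ncard (Set.union_subset (Set.sep_subset S p) (Set.sep_subset S q)) hS
  have hx := ncard_add_le _ _ hxy
  have hy := ncard_add_le _ _ hyx
  unfold degreeIn
  omega

theorem degreeIn_add_degreeIn_add_two_le (hS : S.Finite) (hx : x ∈ S) (hxx : ¬ A x x)
    (hAxy : ¬ A x y) (hAyx : ¬ A y x) (hxy : ∀ z ∈ S, A x z → ¬ A z y)
    (hyx : ∀ z ∈ S, A y z → ¬ A z x) : degreeIn A x S + degreeIn A y S + 2 ≤ 2 * S.ncard := by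
  rw [← degreeIn_sdiff_singleton S hxx hxx, ← degreeIn_sdiff_singleton S hAyx hAxy,
    ← Set.ncard_sdiff_singleton_add_one hx hS]
  have := degreeIn_add_degreeIn_le (S := S \ {x}) hS.sdiff (fun z hz => hxy z hz.1)
    fun z hz => hyx z hz.1
  omega

end DegreeIn

section Lists

theorem ncard_setOf_mem_list {l : List V} (hl : l.Nodup) : {z | z ∈ l}.ncard = l.length := by
  classical
  rw [← List.coe_toFinset, Set.ncard_coe_finset, List.toFinset_card_of_nodup hl]

theorem exists_length_maximal {s : Set (List V)} (hs : s.Nonempty) {n : ℕ}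
    (hn : ∀ l ∈ s, l.length ≤ n) : ∃ l ∈ s, ∀ l' ∈ s, l'.length ≤ l.length := by
  obtain ⟨l, hl, hmax⟩ := Set.Finite.exists_maximalFor' List.length s
    ((Set.finite_Iic n).subset (Set.image_subset_iff.2 hn)) hs
  exact ⟨l, hl, fun l' hl' => (le_total _ _).elim id (hmax hl')⟩

theorem exists_append_isRotated {l : List V} {u v : V} (hu : u ∈ l) (hv : v ∈ l) :
    ∃ S Q : List V, (S ++ Q).IsRotated l ∧ S.head? = some v ∧ S.getLast? = some u := by
  obtain ⟨a, b, rfl⟩ := List.append_of_mem hv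
  have hrot : (v :: b ++ a).IsRotated (a ++ v :: b) := List.isRotated_append
  obtain ⟨S, Q, hSQ⟩ := List.append_of_mem (hrot.mem_iff.2 hu)
  refine ⟨S ++ [u], Q, by simpa [hSQ] using hrot, ?_, by simp⟩
  rcases S with _ | ⟨w, S⟩ <;> simp_all

end Lists

/-- A directed path from `u` to `v`, given by the list of its vertices; the path with the single
vertex `u = v` is allowed. -/
structure IsPathList (A : V → V → Prop) (u v : V) (l : List V) : Prop where
  nodup : l.Nodup
  isChain : l.IsChain A
  head?_eq : l.head? = some u
  getLast?_eq : l.getLast? = some v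

/-- A directed cycle, given by the list of its vertices from an arbitrary starting point. -/
structure IsCycleList (A : V → V → Prop) (l : List V) : Prop where
  ne_nil : l ≠ []
  nodup : l.Nodup
  chain : Cycle.Chain A (l : Cycle V)

/-- A directed cycle of maximum length. -/
structure IsLongestCycleList (A : V → V → Prop) (l : List V) : Prop extends IsCycleList A l where
  length_le : ∀ {l' : List V}, IsCycleList A l' → l'.length ≤ l.length

section Paths

variable {u v : V} {l : List V}

theorem IsPathList.ne_nil (h : IsPathList A u v l) : l ≠ [] := by
  rintro rfl
  simpa using h.head?_eq

theorem IsPathList.suffix_of_mem {a : V} (h : IsPathList A u v l) (ha : a ∈ l) :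
    ∃ t, t <:+ l ∧ IsPathList A a v t := by
  obtain ⟨s, t, rfl⟩ := List.append_of_mem ha
  refine ⟨a :: t, List.suffix_append .., h.nodup.of_append_right,
    h.isChain.right_of_append, rfl, ?_⟩
  rw [← h.getLast?_eq, List.getLast?_append_of_ne_nil _ (List.cons_ne_nil a t)]

theorem IsPathList.cons {a : V} (h : IsPathList A u v l) (hau : A a u) (ha : a ∉ l) :
    IsPathList A a v (a :: l) where
  nodup := List.nodup_cons.2 ⟨ha, h.nodup⟩
  isChain := List.isChain_cons.2 ⟨by simpa [h.head?_eq] using hau, h.isChain⟩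
  head?_eq := rfl
  getLast?_eq := by simp [List.getLast?_cons, h.getLast?_eq]

theorem exists_isPathList_of_reachIn {S : Set V} (hu : u ∈ S) (h : ReachIn A S u v) :
    ∃ l, IsPathList A u v l ∧ ∀ z ∈ l, z ∈ S := by
  induction h using Relation.ReflTransGen.head_induction_on with
  | refl => exact ⟨[v], ⟨by simp, by simp, rfl, rfl⟩, by simpa using hu⟩
  | @head a b hab _ ih =>
    obtain ⟨l, hl, hlS⟩ := ih hab.2.1
    by_cases ha : a ∈ l
    · obtain ⟨t, htl, ht⟩ := hl.suffix_of_mem ha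
      exact ⟨t, ht, fun z hz => hlS z (htl.subset hz)⟩
    · exact ⟨a :: l, hl.cons hab.2.2 ha, by simpa [hu] using hlS⟩

theorem exists_arc_leaving {S : Set V} (h : Relation.ReflTransGen A u v) (hu : u ∈ S)
    (hv : v ∉ S) : ∃ a ∈ S, ∃ b ∉ S, A a b := by
  induction h with
  | refl => exact absurd hu hv
  | @tail b c _ hbc ih =>
    by_cases hb : b ∈ S
    · exact ⟨b, hb, c, hv, hbc⟩
    · exact ih hb

theorem exists_reachIn_compl_arc {K : Set V} (h : Relation.ReflTransGen A u v) (hu : u ∉ K)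
    (hv : v ∈ K) : ∃ x, ReachIn A Kᶜ u x ∧ ∃ w ∈ K, A x w := by
  induction h using Relation.ReflTransGen.head_induction_on with
  | refl => exact absurd hv hu
  | @head a b hab _ ih =>
    by_cases hb : b ∈ K
    · exact ⟨a, .refl, b, hb, hab⟩
    · obtain ⟨x, hbx, hx⟩ := ih hb
      exact ⟨x, .head ⟨hu, hb, hab⟩ hbx, hx⟩

end Paths

section Cycles

variable {u v : V} {l S Q : List V}

theorem IsPathList.isCycleList_append_iff (hS : IsPathList A v u S) :
    IsCycleList A (S ++ Q) ↔ Q.Nodup ∧ S.Disjoint Q ∧ (u :: (Q ++ [v])).IsChain A := by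
  obtain ⟨S', rfl⟩ := List.head?_eq_some_iff.1 hS.head?_eq
  have hchain : Cycle.Chain A ((v :: S' ++ Q : List V) : Cycle V) ↔
      (u :: (Q ++ [v])).IsChain A := by
    rw [List.cons_append, Cycle.chain_coe_cons, List.append_assoc, ← List.cons_append,
      List.isChain_append, and_iff_right hS.isChain, hS.getLast?_eq, List.isChain_cons]
    simp [and_comm]
  refine ⟨fun h => ⟨h.nodup.of_append_right, List.disjoint_of_nodup_append h.nodup,
    hchain.1 h.chain⟩, fun ⟨hQ, hd, h⟩ => ⟨by simp, hS.nodup.append hQ hd, hchain.2 h⟩⟩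

theorem IsCycleList.isChain (h : IsCycleList A l) : l.IsChain A := by
  obtain ⟨a, t, rfl⟩ := List.exists_cons_of_ne_nil h.ne_nil
  exact List.IsChain.left_of_append (l₂ := [a]) ((Cycle.chain_coe_cons A a t).1 h.chain)

theorem IsCycleList.isRotated {l' : List V} (h : IsCycleList A l) (hl : l.IsRotated l') :
    IsCycleList A l' where
  ne_nil := fun hl' => h.ne_nil (List.isRotated_nil_iff.1 (hl' ▸ hl))
  nodup := hl.nodup_iff.1 h.nodup
  chain := Cycle.coe_eq_coe.2 hl ▸ h.chain

theorem IsLongestCycleList.isRotated {l' : List V} (h : IsLongestCycleList A l)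
    (hl : l.IsRotated l') : IsLongestCycleList A l' where
  toIsCycleList := h.toIsCycleList.isRotated hl
  length_le := fun hc => hl.perm.length_eq ▸ h.length_le hc

theorem IsCycleList.isCycle_get (h : IsCycleList A l) (hl : 2 ≤ l.length) : IsCycle A l.get := by
  refine ⟨hl, List.nodup_iff_injective_get.1 h.nodup, fun i => ?_⟩
  obtain ⟨a, t, rfl⟩ := List.exists_cons_of_ne_nil h.ne_nil
  have harc := List.isChain_iff_getElem.1 ((Cycle.chain_coe_cons A a t).1 h.chain) i
    (by simpa using i.isLt)
  have hi : (a :: (t ++ [a]))[i.val]'(by simp) = (a :: t)[i.val] :=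
    List.getElem_append_left (as := a :: t) (bs := [a]) i.isLt
  rw [hi, List.getElem_cons_succ] at harc
  rcases Nat.lt_or_ge i.val t.length with hit | hit
  · have hmod : (i.val + 1) % (a :: t).length = i.val + 1 := Nat.mod_eq_of_lt (by simpa using hit)
    simpa only [List.get_eq_getElem, hmod, List.getElem_cons_succ, List.getElem_append_left hit]
      using harc
  · have hi' : i.val = t.length := le_antisymm (Nat.le_of_lt_succ i.isLt) hit
    have hmod : (i.val + 1) % (a :: t).length = 0 := by simp [hi']
    simpa [hmod, hi'] using harc

theorem IsCycleList.isHamiltonian [Fintype V] [Nontrivial V] (h : IsCycleList A l)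
    (hmem : ∀ z, z ∈ l) : IsHamiltonian A := by
  classical
  have hcard : l.length = Fintype.card V := by
    simpa using Fintype.card_congr (h.nodup.getEquivOfForallMemList l hmem)
  have htwo : 2 ≤ l.length := hcard ▸ Fintype.one_lt_card
  rw [IsHamiltonian, ← hcard]
  exact ⟨l.get, h.isCycle_get htwo, fun z => List.get_of_mem (hmem z)⟩

theorem exists_isLongestCycleList [Finite V] [Nontrivial V] (hs : IsStrong A) :
    ∃ l, IsLongestCycleList A l := by
  have := Fintype.ofFinite V
  obtain ⟨a, b, hab⟩ := exists_pair_ne V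
  obtain ⟨u, -, v, -, huv⟩ := exists_arc_leaving (S := {a}) (hs a b) rfl hab.symm
  obtain ⟨l, hl, -⟩ := exists_isPathList_of_reachIn (S := Set.univ) (Set.mem_univ v)
    (show ReachIn A Set.univ v u by simpa [ReachIn] using hs v u)
  have hcycle : IsCycleList A l := by
    simpa using hl.isCycleList_append_iff (Q := []).2 (by simpa using huv)
  obtain ⟨l, hl, hmax⟩ := exists_length_maximal (s := {l | IsCycleList A l}) ⟨l, hcycle⟩
    fun l hl => hl.nodup.length_le_card
  exact ⟨l, hl, hmax _⟩

end Cycles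

section Insertion

/-- The vertex `y` cannot be inserted between two consecutive vertices of `l`. -/
def NotInsertable (A : V → V → Prop) (y : V) (l : List V) : Prop :=
  l.IsChain fun p q => ¬ (A p y ∧ A y q)

variable {u v y : V} {l : List V}

theorem exists_consecutive_of_not_notInsertable (h : ¬ NotInsertable A y l) :
    ∃ p q l₁ l₂, l = l₁ ++ p :: q :: l₂ ∧ A p y ∧ A y q := by
  rw [NotInsertable, List.isChain_iff_forall_rel_of_append_cons_cons] at h
  push Not at h
  exact h

theorem IsPathList.exists_insert (hl : IsPathList A u v l) (hy : y ∉ l)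
    (h : ¬ NotInsertable A y l) : ∃ l', IsPathList A u v l' ∧ l'.Perm (y :: l) := by
  obtain ⟨p, q, l₁, l₂, rfl, hpy, hyq⟩ := exists_consecutive_of_not_notInsertable h
  have hperm : ((l₁ ++ [p]) ++ y :: (q :: l₂)).Perm (y :: (l₁ ++ p :: q :: l₂)) := by
    simpa using List.perm_middle (a := y) (l₁ := l₁ ++ [p]) (l₂ := q :: l₂)
  refine ⟨_, ⟨hperm.nodup_iff.2 (List.nodup_cons.2 ⟨hy, hl.nodup⟩), ?_, ?_, ?_⟩, hperm⟩
  · have := hl.isChain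
    simp_all [List.isChain_append]
  · rw [← hl.head?_eq]; simp
  · rw [← hl.getLast?_eq]; simp

theorem IsPathList.exists_insert_maximal (hl : IsPathList A u v l) (Q : List V) :
    ∃ T, IsPathList A u v T ∧ l ⊆ T ∧ T ⊆ l ++ Q ∧ ∀ y ∈ Q, y ∉ T → NotInsertable A y T := by
  obtain ⟨T, ⟨hT, hlT, hTQ⟩, hmax⟩ := exists_length_maximal
    (s := {T | IsPathList A u v T ∧ l ⊆ T ∧ T ⊆ l ++ Q})
    ⟨l, hl, List.Subset.refl l, List.subset_append_left l Q⟩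
    fun T hT => (hT.1.nodup.subperm hT.2.2).length_le
  refine ⟨T, hT, hlT, hTQ, fun y hyQ hyT => by_contra fun hy => ?_⟩
  obtain ⟨T', hT', hperm⟩ := hT.exists_insert hyT hy
  have hle := hmax T' ⟨hT', fun z hz => hperm.mem_iff.2 (List.mem_cons_of_mem y (hlT hz)),
    fun z hz => ?_⟩
  · simp [hperm.length_eq] at hle
  · rcases List.mem_cons.1 (hperm.mem_iff.1 hz) with rfl | hzT
    · exact List.mem_append_right l hyQ
    · exact hTQ hzT

open Classical in
/-- The last term, at most one, is what makes the bound inductive. -/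
theorem NotInsertable.degreeIn_cons_le {p : V} (h : NotInsertable A y (p :: l)) :
    degreeIn A y {z | z ∈ p :: l} ≤ (p :: l).length + if A y p then 1 else 0 := by
  have hcons (l : List V) (p : V) :
      degreeIn A y {z | z ∈ p :: l} ≤ degreeIn A y {p} + degreeIn A y {z | z ∈ l} := by
    simpa only [List.mem_cons, Set.ofPred_or, Set.ofPred_eq_eq_singleton] using
      degreeIn_union_le A y {p} {z | z ∈ l}
  induction l generalizing p with
  | nil =>
    simp only [List.mem_singleton, Set.ofPred_eq_eq_singleton, degreeIn_singleton,
      List.length_singleton]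
    split_ifs <;> omega
  | cons q l ih =>
    obtain ⟨hpq, hql⟩ := List.isChain_cons_cons.1 h
    have hl := ih hql
    have hp := hcons (q :: l) p
    rw [degreeIn_singleton] at hp
    rw [List.length_cons]
    split_ifs at * <;> first | omega | tauto

theorem NotInsertable.degreeIn_le (h : NotInsertable A y l) :
    degreeIn A y {z | z ∈ l} ≤ l.length + 1 := by
  classical
  cases l with
  | nil => simp [degreeIn]
  | cons p l =>
    refine h.degreeIn_cons_le.trans (Nat.add_le_add_left ?_ _)
    split_ifs <;> omega

end Insertion

/-- A directed path from `u` to `v` with at least one internal vertex, all of whose internal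
vertices lie outside `K`. The ends may coincide. -/
def HasBypass (A : V → V → Prop) (K : Set V) (u v : V) : Prop :=
  ∃ x ∉ K, ∃ x', A u x ∧ ReachIn A Kᶜ x x' ∧ A x' v

/-- A longest cycle `S ++ Q` with a bypass of the segment `Q`: it starts at the last vertex `u` of
`S` and ends at the first vertex `v` of `S`. -/
structure IsBypassedCycle (A : V → V → Prop) (S Q : List V) (u v : V) : Prop where
  isLongest : IsLongestCycleList A (S ++ Q)
  head?_eq : S.head? = some v
  getLast?_eq : S.getLast? = some u
  hasBypass : HasBypass A {z | z ∈ S ++ Q} u v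

theorem IsLongestCycleList.exists_isBypassedCycle {l : List V} (hl : IsLongestCycleList A l)
    (hs : IsStrong A) {b : V} (hb : b ∉ l) : ∃ S Q u v, IsBypassedCycle A S Q u v := by
  obtain ⟨a, ha⟩ := List.exists_mem_of_ne_nil l hl.ne_nil
  obtain ⟨u, hu, x, hx, hux⟩ := exists_arc_leaving (S := {z | z ∈ l}) (hs a b) ha hb
  obtain ⟨x', hxx', v, hv, hxv⟩ := exists_reachIn_compl_arc (hs x u) hx hu
  obtain ⟨S, Q, hrot, hhead, hlast⟩ := exists_append_isRotated hu hv
  have hmem : {z | z ∈ S ++ Q} = {z | z ∈ l} := Set.ext fun z => hrot.mem_iff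
  exact ⟨S, Q, u, v, hl.isRotated hrot.symm, hhead, hlast, hmem ▸ ⟨x, hx, x', hux, hxx', hxv⟩⟩

namespace IsBypassedCycle

variable {S Q : List V} {u v q x : V}

theorem isPathList (h : IsBypassedCycle A S Q u v) : IsPathList A v u S where
  nodup := h.isLongest.nodup.of_append_left
  isChain := h.isLongest.isChain.left_of_append
  head?_eq := h.head?_eq
  getLast?_eq := h.getLast?_eq

theorem exists_shorter_of_hasBypass_right (h : IsBypassedCycle A S Q u v) (hq : q ∈ Q)
    (hb : HasBypass A {z | z ∈ S ++ Q} u q) :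
    ∃ S' Q', IsBypassedCycle A S' Q' u q ∧ Q'.length < Q.length := by
  obtain ⟨Q₁, Q₂, rfl⟩ := List.append_of_mem hq
  have hrot : (S ++ (Q₁ ++ q :: Q₂)).IsRotated (q :: Q₂ ++ S ++ Q₁) := by
    simpa using List.isRotated_append (l := S ++ Q₁) (l' := q :: Q₂)
  have hmem : {z | z ∈ S ++ (Q₁ ++ q :: Q₂)} = {z | z ∈ q :: Q₂ ++ S ++ Q₁} :=
    Set.ext fun z => hrot.mem_iff
  refine ⟨q :: Q₂ ++ S, Q₁, ⟨h.isLongest.isRotated hrot, rfl, ?_, hmem ▸ hb⟩, by simp⟩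
  rw [List.getLast?_append_of_ne_nil _ h.isPathList.ne_nil, h.getLast?_eq]

theorem exists_shorter_of_hasBypass_left (h : IsBypassedCycle A S Q u v) (hq : q ∈ Q)
    (hb : HasBypass A {z | z ∈ S ++ Q} q v) :
    ∃ S' Q', IsBypassedCycle A S' Q' q v ∧ Q'.length < Q.length := by
  obtain ⟨Q₁, Q₂, rfl⟩ := List.append_of_mem hq
  have hassoc : S ++ (Q₁ ++ q :: Q₂) = S ++ Q₁ ++ [q] ++ Q₂ := by simp
  refine ⟨S ++ Q₁ ++ [q], Q₂, ⟨hassoc ▸ h.isLongest, ?_, by simp, hassoc ▸ hb⟩, by simp; omega⟩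
  rw [List.append_assoc, List.head?_append_of_ne_nil _ h.isPathList.ne_nil, h.head?_eq]

theorem notInsertable (h : IsBypassedCycle A S Q u v) (hx : x ∉ S ++ Q) :
    NotInsertable A x S := by
  by_contra hins
  obtain ⟨hxS, hxQ⟩ := not_or.1 (mt List.mem_append.2 hx)
  obtain ⟨T, hT, hperm⟩ := h.isPathList.exists_insert hxS hins
  obtain ⟨hQ, hSQ, hchain⟩ := h.isPathList.isCycleList_append_iff.1 h.isLongest.toIsCycleList
  have hTQ : T.Disjoint Q := fun z hzT hzQ => by
    rcases List.mem_cons.1 (hperm.mem_iff.1 hzT) with rfl | hzS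
    · exact hxQ hzQ
    · exact hSQ hzS hzQ
  have hle := h.isLongest.length_le (hT.isCycleList_append_iff.2 ⟨hQ, hTQ, hchain⟩)
  simp [hperm.length_eq] at hle

theorem exists_mem_notMem (h : IsBypassedCycle A S Q u v) {T : List V}
    (hT : IsPathList A v u T) (hTK : T ⊆ S ++ Q) (hST : S ⊆ T) : ∃ y ∈ Q, y ∉ T := by
  by_contra! hQT
  obtain ⟨x, hx, x', hux, hreach, hxv⟩ := h.hasBypass
  obtain ⟨p, hp, hpK⟩ := exists_isPathList_of_reachIn (S := {z | z ∈ S ++ Q}ᶜ) hx hreach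
  have hchain : (u :: (p ++ [v])).IsChain A := by
    rw [List.isChain_cons, List.isChain_append, hp.getLast?_eq,
      List.head?_append_of_ne_nil _ hp.ne_nil, hp.head?_eq]
    simpa [hp.isChain, hux] using hxv
  have hle := h.isLongest.length_le (hT.isCycleList_append_iff.2
    ⟨hp.nodup, fun z hzT hzp => hpK z hzp (hTK hzT), hchain⟩)
  have hSQT : (S ++ Q).length ≤ T.length :=
    (h.isLongest.nodup.subperm (List.append_subset.2 ⟨hST, hQT⟩)).length_le
  have hp_pos := List.length_pos_of_ne_nil hp.ne_nil
  rw [List.length_append] at hle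
  omega

theorem degreeIn_le_of_not_adj (h : IsBypassedCycle A S Q u v) (hx : x ∉ S ++ Q)
    (hxQ : ∀ q ∈ Q, ¬ A x q) (hQx : ∀ q ∈ Q, ¬ A q x) :
    degreeIn A x {z | z ∈ S ++ Q} ≤ S.length + 1 := by
  have mem_of_sdiff : ∀ z ∈ {z | z ∈ S ++ Q} \ {z | z ∈ S}, z ∈ Q := fun z hz =>
    (List.mem_append.1 hz.1).resolve_left hz.2
  have hS : {z | z ∈ S} ⊆ {z | z ∈ S ++ Q} := fun _ => List.mem_append_left Q
  rw [degreeIn_eq_of_subset hS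
    (fun z hz => hxQ z (mem_of_sdiff z hz)) (fun z hz => hQx z (mem_of_sdiff z hz))]
  exact (h.notInsertable hx).degreeIn_le

theorem exists_mem_degreeIn_le (h : IsBypassedCycle A S Q u v) (hirr : ∀ z, ¬ A z z) :
    ∃ y ∈ Q, degreeIn A y {z | z ∈ S ++ Q} + S.length + 1 ≤ 2 * (S ++ Q).length := by
  obtain ⟨T, hT, hST, hTK, hins⟩ := h.isPathList.exists_insert_maximal Q
  obtain ⟨y, hyQ, hyT⟩ := h.exists_mem_notMem hT hTK hST
  have hyT_le := (hins y hyQ hyT).degreeIn_le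
  have hyK_le := degreeIn_add_two_mul_ncard_le (T := {z | z ∈ T})
    (S ++ Q).finite_toSet hTK (List.mem_append_right S hyQ) hyT (hirr y)
  rw [ncard_setOf_mem_list hT.nodup, ncard_setOf_mem_list h.isLongest.nodup] at hyK_le
  have hlen := (h.isPathList.nodup.subperm hST).length_le
  exact ⟨y, hyQ, by omega⟩

theorem exists_degree_add_degree_le [Finite V] (h : IsBypassedCycle A S Q u v)
    (hmin : ∀ {S' Q' u' v'}, IsBypassedCycle A S' Q' u' v' → Q.length ≤ Q'.length)
    (hirr : ∀ z, ¬ A z z) :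
    ∃ x y, x ≠ y ∧ ¬ A x y ∧ ¬ A y x ∧ degree A x + degree A y + 2 ≤ 2 * Nat.card V := by
  have hright : ∀ q ∈ Q, ¬ HasBypass A {z | z ∈ S ++ Q} u q := fun q hq hb => by
    obtain ⟨S', Q', h', hlt⟩ := h.exists_shorter_of_hasBypass_right hq hb
    exact hlt.not_ge (hmin h')
  have hleft : ∀ q ∈ Q, ¬ HasBypass A {z | z ∈ S ++ Q} q v := fun q hq hb => by
    obtain ⟨S', Q', h', hlt⟩ := h.exists_shorter_of_hasBypass_left hq hb
    exact hlt.not_ge (hmin h')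
  obtain ⟨x, hx, x', hux, hreach, hxv⟩ := h.hasBypass
  have hxQ : ∀ q ∈ Q, ¬ A x q := fun q hq hxq => hright q hq ⟨x, hx, x, hux, .refl, hxq⟩
  have hQx : ∀ q ∈ Q, ¬ A q x := fun q hq hqx => hleft q hq ⟨x, hx, x', hqx, hreach, hxv⟩
  have hx_in := h.degreeIn_le_of_not_adj hx hxQ hQx
  obtain ⟨y, hyQ, hy_in⟩ := h.exists_mem_degreeIn_le hirr
  have hout := degreeIn_add_degreeIn_add_two_le (S := {z | z ∈ S ++ Q}ᶜ) (Set.toFinite _) hx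
    (hirr x) (hxQ y hyQ) (hQx y hyQ)
    (fun z hz hxz hzy => hright y hyQ ⟨x, hx, z, hux, .single ⟨hx, hz, hxz⟩, hzy⟩)
    (fun z hz hyz hzx => hleft y hyQ ⟨z, hz, x', hyz, .head ⟨hz, hx, hzx⟩ hreach, hxv⟩)
  have hdegree (w : V) := degreeIn_union_le A w {z | z ∈ S ++ Q} {z | z ∈ S ++ Q}ᶜ
  simp only [Set.union_compl_self, degreeIn_univ] at hdegree
  have hcard := Set.ncard_add_ncard_compl {z | z ∈ S ++ Q}
  rw [ncard_setOf_mem_list h.isLongest.nodup] at hcard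
  have hdx := hdegree x
  have hdy := hdegree y
  refine ⟨x, y, ?_, hxQ y hyQ, hQx y hyQ, by omega⟩
  rintro rfl
  exact hx (List.mem_append_right S hyQ)

end IsBypassedCycle

theorem IsLongestCycleList.exists_degree_add_degree_le [Finite V] {l : List V}
    (hl : IsLongestCycleList A l) (hs : IsStrong A) (hirr : ∀ z, ¬ A z z) {b : V} (hb : b ∉ l) :
    ∃ x y, x ≠ y ∧ ¬ A x y ∧ ¬ A y x ∧ degree A x + degree A y + 2 ≤ 2 * Nat.card V := by
  have hex : ∃ k S Q u v, IsBypassedCycle A S Q u v ∧ Q.length = k := by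
    obtain ⟨S, Q, u, v, h⟩ := hl.exists_isBypassedCycle hs hb
    exact ⟨_, S, Q, u, v, h, rfl⟩
  classical
  obtain ⟨S, Q, u, v, h, hlen⟩ := Nat.find_spec hex
  exact h.exists_degree_add_degree_le
    (fun {S' Q' u' v'} h' => hlen ▸ Nat.find_min' hex ⟨S', Q', u', v', h', rfl⟩) hirr

end Meyniel

/-- Meyniel: a strong digraph of order `n ≥ 2` in which `d(x) + d(y) ≥ 2n - 1` for every
pair of non-adjacent vertices `x`, `y` is Hamiltonian. -/
theorem statement11 {V : Type*} [Fintype V] [DecidableEq V] (A : V → V → Prop)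
    (hirr : Irreflexive A)
    (n : ℕ) (hn2 : 2 ≤ n) (hcard : Fintype.card V = n)
    (hstrong : IsStrong A)
    (hdeg : ∀ x y : V, x ≠ y → ¬ A x y → ¬ A y x →
      2 * n - 1 ≤ degree A x + degree A y) :
    IsHamiltonian A := by
  subst hcard
  have : Nontrivial V := Fintype.one_lt_card_iff_nontrivial.1 hn2
  obtain ⟨l, hl⟩ := Meyniel.exists_isLongestCycleList hstrong
  have hmem : ∀ b, b ∈ l := by
    by_contra! ⟨b, hb⟩
    obtain ⟨x, y, hne, hxy, hyx, hle⟩ := hl.exists_degree_add_degree_le hstrong hirr hb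
    have := hdeg x y hne hxy hyx
    rw [Nat.card_eq_fintype_card] at hle
    omega
  exact hl.toIsCycleList.isHamiltonian hmem
end

section
/- Let D be a non-Hamiltonian 2-strong digraph of order n such that n−1 of its vertices have degree at least n+1 and the remaining vertex z has degree at most n−2. Suppose C = x_1 x_2 … x_m z x_1, with 2 ≤ m ≤ n−3, is a longest directed cycle through z in D, the set Y = V(D) \ V(C) contains two distinct vertices y_1, y_2 that are mutually reachable in D⟨Y⟩ with d(y_i, {x_1, …, x_m}) = m+1 for each i ∈ {1,2}, and l is an integer with 2 ≤ l ≤ m−1 such that every vertex of {x_l, …, x_m} dominates both y_1 and y_2 and both y_1 and y_2 dominate every vertex of {x_1, …, x_l}. Set E = {x_1, …, x_{l−1}} and F = {x_{l+1}, …, x_m}. Then there is at least one arc of D from a vertex of E to a vertex of F. -/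
/-! A path outside a longest cycle `C` through `z` cannot be inserted into an arc of `C`. Hence a
vertex outside `C` has at most `m + 1` arcs to and from `C`, and the degree condition forces any two
vertices outside `C` to be comparable for reachability off `C`.

Suppose there is no arc from `E` to `F`. As `x_l` is not a cut vertex, some path from `E` to `F`
avoids it. The same insertion argument, applied to `y₁`, rules out a detour of this path off `C`,
so it must pass through `z`: there are arcs `u z` with `u ∈ E` and `z v` with `v ∈ F`. With
`P = x_1 … u`, `R = v … x_m` and `Q` the segment between them, `z R y₂ Q y₁ P z` is a cycle
longer than `C`. -/

open scoped List

section Lists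

variable {α : Type*} {a b : α} {l : List α}

theorem exists_pair_infix_append_singleton (ha : a ∈ l) :
    ∃ c ∈ l.tail ++ [b], [a, c] <:+: l ++ [b] := by
  obtain ⟨s, t, rfl⟩ := List.append_of_mem ha
  cases t with
  | nil => exact ⟨b, by simp, s, [], by simp⟩
  | cons c t => exact ⟨c, by cases s <;> simp, s, t ++ [b], by simp⟩

theorem exists_pair_infix_cons (hb : b ∈ l) :
    ∃ c ∈ a :: l.dropLast, [c, b] <:+: a :: l := by
  obtain ⟨s, t, rfl⟩ := List.append_of_mem hb
  rcases List.eq_nil_or_concat' s with rfl | ⟨s, c, rfl⟩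
  · exact ⟨a, by simp, [], t, by simp⟩
  · exact ⟨c, by simp, a :: s, t, by simp⟩

theorem exists_eq_append_of_append_eq_cons_append_singleton {s t : List α} (hs : s ≠ [])
    (ht : t ≠ []) (h : s ++ t = a :: (l ++ [b])) :
    ∃ s' t', s = a :: s' ∧ t = t' ++ [b] ∧ l = s' ++ t' := by
  obtain ⟨c, s, rfl⟩ := List.exists_cons_of_ne_nil hs
  obtain rfl | ⟨t, d, rfl⟩ := List.eq_nil_or_concat' t
  · contradiction
  · obtain ⟨rfl, hl⟩ : c = a ∧ (s ++ t) ++ [d] = l ++ [b] := by simpa using h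
    obtain ⟨rfl, hd⟩ := List.append_inj' hl rfl
    exact ⟨s, t, rfl, by rw [hd], rfl⟩

theorem countP_dropLast_add_countP_le {p q : α → Bool}
    (h : (a :: l).IsChain fun u v => p u → ¬ q v) :
    (a :: l).dropLast.countP p + l.countP q ≤ l.length := by
  induction l generalizing a with
  | nil => simp
  | cons b l ih =>
    obtain ⟨hab, hl⟩ := List.isChain_cons_cons.1 h
    have := ih hl
    simp only [List.dropLast_cons_cons, List.countP_cons, List.length_cons]
    grind

theorem ncard_sep_mem_le_countP (l : List α) (p : α → Prop) [DecidablePred p] :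
    {x ∈ {x | x ∈ l} | p x}.ncard ≤ l.countP p := by
  classical
  have h : {x ∈ {x | x ∈ l} | p x} = ((l.filter p).toFinset : Set α) := by
    ext; simp
  rw [h, Set.ncard_coe_finset, List.countP_eq_length_filter]
  exact List.toFinset_card_le _

theorem mem_take_ofFn {m k : ℕ} {x : Fin m → α} :
    a ∈ (List.ofFn x).take k ↔ ∃ i : Fin m, i.val < k ∧ x i = a := by
  simp only [List.mem_take_iff_getElem, List.length_ofFn, List.getElem_ofFn]
  exact ⟨fun ⟨i, hi, hx⟩ => ⟨⟨i, by omega⟩, by dsimp only; omega, hx⟩,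
    fun ⟨i, hi, hx⟩ => ⟨i, by omega, hx⟩⟩

theorem mem_drop_ofFn {m k : ℕ} {x : Fin m → α} :
    a ∈ (List.ofFn x).drop k ↔ ∃ i : Fin m, k ≤ i.val ∧ x i = a := by
  simp only [List.mem_drop_iff_getElem, List.length_ofFn, List.getElem_ofFn]
  exact ⟨fun ⟨i, hi, hx⟩ => ⟨⟨k + i, by omega⟩, Nat.le_add_right k i, hx⟩,
    fun ⟨i, hi, hx⟩ => ⟨i - k, by omega, by simpa only [Nat.add_sub_cancel' hi] using hx⟩⟩

theorem ofFn_eq_take_append_cons_drop {m k : ℕ} (x : Fin m → α) (hk : k < m) :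
    List.ofFn x = (List.ofFn x).take k ++ x ⟨k, hk⟩ :: (List.ofFn x).drop (k + 1) := by
  rw [← List.getElem_ofFn (f := x) (i := k) (by simpa using hk), ← List.drop_eq_getElem_cons,
    List.take_append_drop]

end Lists

section Reachability

variable {V : Type*} {A : V → V → Prop} {S T : Set V} {p q u v : V}

theorem ReachIn.exists_path (h : ReachIn A S p q) (hq : q ∈ S) :
    ∃ W, (p :: W).Nodup ∧ (∀ w ∈ p :: W, w ∈ S) ∧ (p :: W).IsChain A ∧
      q ∈ (p :: W).getLast? := by
  induction h using Relation.ReflTransGen.head_induction_on with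
  | refl => exact ⟨[], by simp, by simpa using hq, by simp, by simp⟩
  | @head a b hab _ ih =>
    obtain ⟨W, hnodup, hS, hchain, hlast⟩ := ih
    by_cases ha : a ∈ b :: W
    · obtain ⟨s, t, hst⟩ := List.append_of_mem ha
      rw [hst] at hnodup hS hchain hlast
      exact ⟨t, hnodup.of_append_right, fun w hw => hS w (List.mem_append_right s hw),
        hchain.right_of_append, by simpa using hlast⟩
    · exact ⟨b :: W, List.nodup_cons.2 ⟨ha, hnodup⟩, List.forall_mem_cons.2 ⟨hab.1, hS⟩,
        hchain.cons_cons hab.2.2, by simpa using hlast⟩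

theorem ReachIn.exists_exit (h : ReachIn A S p q) (hp : p ∈ T) (hq : q ∉ T) :
    ∃ u v, u ∈ T ∧ v ∉ T ∧ u ∈ S ∧ v ∈ S ∧ A u v := by
  by_contra! hclosed
  refine hq (h.rec hp fun _ hab hb => ?_)
  by_contra hc
  exact hclosed _ _ hb hc hab.1 hab.2.1 hab.2.2

theorem ncard_out_add_ncard_in_add_two_le_of_not_reachIn [Finite V] (hirr : ∀ v, ¬ A v v)
    (hu : u ∈ S) (hv : v ∈ S) (huv : ¬ ReachIn A S u v) :
    {y ∈ S | A u y}.ncard + {y ∈ S | A y v}.ncard + 2 ≤ S.ncard := by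
  have hne : u ≠ v := by rintro rfl; exact huv .refl
  have harc : ¬ A u v := fun h => huv (.single ⟨hu, hv, h⟩)
  have hdisj : Disjoint {y ∈ S | A u y} {y ∈ S | A y v} := Set.disjoint_left.2
    fun w hw hw' => huv (.tail (.single ⟨hu, hw.1, hw.2⟩) ⟨hw.1, hv, hw'.2⟩)
  have hdisj' : Disjoint ({y ∈ S | A u y} ∪ {y ∈ S | A y v}) {u, v} := by
    simp [hirr u, hirr v, harc]
  rw [← Set.ncard_union_eq hdisj, ← Set.ncard_pair hne, ← Set.ncard_union_eq hdisj']
  refine Set.ncard_le_ncard (Set.union_subset (Set.union_subset ?_ ?_) ?_)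
  · exact Set.sep_subset _ _
  · exact Set.sep_subset _ _
  · exact Set.pair_subset hu hv

theorem degreeIn_add_degreeIn_add_four_le_of_not_reachIn [Finite V] (hirr : ∀ v, ¬ A v v)
    (hu : u ∈ S) (hv : v ∈ S) (huv : ¬ ReachIn A S u v) (hvu : ¬ ReachIn A S v u) :
    degreeIn A u S + degreeIn A v S + 4 ≤ 2 * S.ncard := by
  have h₁ := ncard_out_add_ncard_in_add_two_le_of_not_reachIn hirr hu hv huv
  have h₂ := ncard_out_add_ncard_in_add_two_le_of_not_reachIn hirr hv hu hvu
  unfold degreeIn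
  omega

theorem degreeIn_add_degreeIn_compl [Finite V] (A : V → V → Prop) (v : V) (S : Set V) :
    degreeIn A v S + degreeIn A v Sᶜ = degree A v := by
  have hsplit (P : V → Prop) : {y ∈ S | P y}.ncard + {y ∈ Sᶜ | P y}.ncard = {y | P y}.ncard := by
    rw [← Set.ncard_inter_add_ncard_sdiff_eq_ncard {y | P y} S]
    congr 2 <;> ext <;> simp [and_comm]
  rw [degree, degreeIn, degreeIn, ← hsplit (A v ·), ← hsplit (A · v)]
  ring

end Reachability

/-- A directed cycle through the base vertex `z`, encoded by the list `L` of its other vertices in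
cyclic order, starting after `z`. Its arcs are the two-element infixes of `z :: (L ++ [z])`; the
degenerate case `L = []` is a loop at `z`. -/
structure IsCycleThrough {V : Type*} (A : V → V → Prop) (z : V) (L : List V) : Prop where
  nodup : (z :: L).Nodup
  isChain : (z :: (L ++ [z])).IsChain A

/-- A directed cycle through `z` with the maximum number of vertices among those through `z`. -/
structure IsLongestCycleThrough {V : Type*} (A : V → V → Prop) (z : V) (L : List V) : Prop
    extends IsCycleThrough A z L where
  length_le : ∀ L', IsCycleThrough A z L' → L'.length ≤ L.length

section Cycles

variable {V : Type*} {A : V → V → Prop} {z p q u v : V} {L : List V}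

theorem IsCycleThrough.isCycle_get (h : IsCycleThrough A z L) (hL : L ≠ []) :
    IsCycle A (z :: L).get := by
  have hpos : 0 < L.length := List.length_pos_iff.2 hL
  refine ⟨Nat.succ_le_succ hpos, List.nodup_iff_injective_get.1 h.nodup, ?_⟩
  rintro ⟨i, hi⟩
  have hclosed : ((z :: L) ++ [z]).IsChain A := h.isChain
  have harc := List.isChain_iff_getElem.1 hclosed i (by simpa using hi)
  rw [List.getElem_append_left hi] at harc
  rcases Nat.lt_or_eq_of_le (Nat.succ_le_of_lt hi) with hlt | heq
  · rw [List.getElem_append_left hlt] at harc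
    simpa only [List.get_eq_getElem, Nat.mod_eq_of_lt hlt] using harc
  · rw [List.getElem_append_right heq.ge] at harc
    simpa [← heq] using harc

theorem IsCycleThrough.exists_insert {W : List V} (h : IsCycleThrough A z L)
    (huv : [u, v] <:+: z :: (L ++ [z])) (hnodup : (p :: W).Nodup)
    (hout : ∀ w ∈ p :: W, w ∉ z :: L) (hchain : (p :: W).IsChain A) (hup : A u p)
    (hqv : ∀ q ∈ (p :: W).getLast?, A q v) :
    ∃ L', IsCycleThrough A z L' ∧ L.length < L'.length := by
  obtain ⟨s, t, hst⟩ := huv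
  have hL : (s ++ [u]) ++ (v :: t) = z :: (L ++ [z]) := by simpa using hst
  obtain ⟨hs, ht, -⟩ := List.isChain_append.1 (hL ▸ h.isChain)
  obtain ⟨s', t', hs', ht', rfl⟩ :=
    exists_eq_append_of_append_eq_cons_append_singleton (by simp) (by simp) hL
  refine ⟨s' ++ (p :: W) ++ t', ⟨?_, ?_⟩, by simp⟩
  · have hperm : z :: (s' ++ (p :: W) ++ t') ~ (z :: (s' ++ t')) ++ (p :: W) := by
      simp only [List.cons_append, List.append_assoc]
      exact ((List.perm_append_comm (l₁ := p :: W) (l₂ := t')).append_left s').cons z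
    rw [hperm.nodup_iff]
    exact h.nodup.append hnodup fun w hw hw' => hout w hw' hw
  · have hsplit : z :: (s' ++ (p :: W) ++ t' ++ [z]) = (s ++ [u]) ++ ((p :: W) ++ (v :: t)) := by
      simp [hs', ht']
    rw [hsplit]
    refine hs.append (hchain.append ht ?_) ?_
    · simpa using hqv
    · simpa using hup

theorem IsLongestCycleThrough.not_reachIn (h : IsLongestCycleThrough A z L)
    (huv : [u, v] <:+: z :: (L ++ [z])) (hup : A u p) (hqv : A q v) (hq : q ∉ z :: L) :
    ¬ ReachIn A {w | w ∈ z :: L}ᶜ p q := by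
  intro hpq
  obtain ⟨W, hnodup, hout, hchain, hlast⟩ := hpq.exists_path hq
  obtain ⟨L', hL', hlt⟩ := h.exists_insert huv hnodup hout hchain hup
    fun w hw => Option.mem_unique hw hlast ▸ hqv
  exact hlt.not_ge (h.length_le L' hL')

theorem IsLongestCycleThrough.degreeIn_le (h : IsLongestCycleThrough A z L) (hq : q ∉ z :: L) :
    degreeIn A q {w | w ∈ z :: L} ≤ L.length + 1 := by
  classical
  have hchain : (z :: (L ++ [z])).IsChain fun u v => A u q → ¬ A q v :=
    (List.isChain_isInfix _).imp fun u v huv hu hv => h.not_reachIn huv hu hv hq .refl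
  have hcount := countP_dropLast_add_countP_le (p := (A · q)) (q := (A q ·)) (by simpa using hchain)
  have hperm : L ++ [z] ~ z :: L := List.perm_append_singleton z L
  rw [← List.cons_append, List.dropLast_concat, hperm.countP_eq, List.length_append] at hcount
  have hout := ncard_sep_mem_le_countP (z :: L) (A q ·)
  have hin := ncard_sep_mem_le_countP (z :: L) (A · q)
  unfold degreeIn
  exact (add_le_add hout hin).trans (by simpa [add_comm] using hcount)

theorem IsCycleThrough.length_add_ncard_compl [Finite V] (h : IsCycleThrough A z L) :
    L.length + 1 + {w | w ∈ z :: L}ᶜ.ncard = Nat.card V := by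
  classical
  have hset : {w | w ∈ z :: L} = ((z :: L).toFinset : Set V) := by ext; simp
  rw [← Set.ncard_add_ncard_compl {w | w ∈ z :: L}, hset, Set.ncard_coe_finset,
    List.toFinset_card_of_nodup h.nodup, List.length_cons]

theorem IsLongestCycleThrough.reachIn_or_reachIn [Finite V] (h : IsLongestCycleThrough A z L)
    (hirr : ∀ v, ¬ A v v) (hp : p ∉ z :: L) (hq : q ∉ z :: L)
    (hdegp : Nat.card V ≤ degree A p + 1) (hdegq : Nat.card V ≤ degree A q + 1) :
    ReachIn A {w | w ∈ z :: L}ᶜ p q ∨ ReachIn A {w | w ∈ z :: L}ᶜ q p := by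
  by_contra! hpq
  have hle := degreeIn_add_degreeIn_add_four_le_of_not_reachIn hirr hp hq hpq.1 hpq.2
  have hcard := h.length_add_ncard_compl
  have hdegp' := degreeIn_add_degreeIn_compl A p {w | w ∈ z :: L}
  have hdegq' := degreeIn_add_degreeIn_compl A q {w | w ∈ z :: L}
  have := h.degreeIn_le hp
  have := h.degreeIn_le hq
  omega

theorem IsCycleThrough.reroute {P Q R : List V} {y₁ y₂ : V}
    (h : IsCycleThrough A z (P ++ Q ++ R)) (hP : P ≠ []) (hQ : Q ≠ []) (hR : R ≠ [])
    (hy₁ : y₁ ∉ z :: (P ++ Q ++ R)) (hy₂ : y₂ ∉ z :: (P ++ Q ++ R)) (hne : y₁ ≠ y₂)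
    (hzR : ∀ v ∈ R.head?, A z v) (hRy₂ : ∀ v ∈ R.getLast?, A v y₂)
    (hy₂Q : ∀ v ∈ Q.head?, A y₂ v) (hQy₁ : ∀ v ∈ Q.getLast?, A v y₁)
    (hy₁P : ∀ v ∈ P.head?, A y₁ v) (hPz : ∀ v ∈ P.getLast?, A v z) :
    IsCycleThrough A z (R ++ y₂ :: (Q ++ y₁ :: P)) where
  nodup := by
    have := h.nodup
    grind
  isChain := by
    have hchain : (P ++ Q ++ R).IsChain A := h.isChain.tail.left_of_append
    obtain ⟨hPQ, hRchain, -⟩ := List.isChain_append.1 hchain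
    obtain ⟨hPchain, hQchain, -⟩ := List.isChain_append.1 hPQ
    have hlast {x : V} {l : List V} (hl : l ≠ []) : (x :: l).getLast? = l.getLast? := by
      rw [List.getLast?_cons, List.getLast?_eq_some_getLast hl, Option.getD_some]
    have hy₁Pz : (y₁ :: P ++ [z]).IsChain A := by
      refine (hPchain.cons hy₁P).append (.singleton z) ?_
      simpa [hlast hP] using hPz
    have hy₂Qy₁ : (y₂ :: Q ++ (y₁ :: P ++ [z])).IsChain A := by
      refine (hQchain.cons hy₂Q).append hy₁Pz ?_
      simpa [hlast hQ] using hQy₁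
    have hzRy₂ : (z :: R ++ (y₂ :: Q ++ (y₁ :: P ++ [z]))).IsChain A := by
      refine (hRchain.cons hzR).append hy₂Qy₁ ?_
      simpa [hlast hR] using hRy₂
    simpa using hzRy₂

end Cycles

section CutVertex

variable {V : Type*} {A : V → V → Prop} {z u v w y a b : V} {E F : List V}

theorem IsLongestCycleThrough.not_reachIn_of_forall_arc_from
    (h : IsLongestCycleThrough A z (E ++ w :: F)) (hy : y ∉ z :: (E ++ w :: F))
    (hyE : ∀ x ∈ E ++ [w], A y x) (hu : u ∈ z :: E) (huv : A u v) :
    ¬ ReachIn A {x | x ∈ z :: (E ++ w :: F)}ᶜ v y := by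
  obtain ⟨x, hx, hux⟩ := exists_pair_infix_append_singleton (b := w) hu
  exact h.not_reachIn (hux.trans ⟨[], F ++ [z], by simp⟩) huv (hyE x hx) hy

theorem IsLongestCycleThrough.not_reachIn_of_forall_arc_to
    (h : IsLongestCycleThrough A z (E ++ w :: F)) (hu : u ∉ z :: (E ++ w :: F))
    (hFy : ∀ x ∈ w :: F, A x y) (hv : v ∈ F ++ [z]) (huv : A u v) :
    ¬ ReachIn A {x | x ∈ z :: (E ++ w :: F)}ᶜ y u := by
  obtain ⟨x, hx, hxv⟩ := exists_pair_infix_cons (a := w) hv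
  rw [List.dropLast_concat] at hx
  exact h.not_reachIn (hxv.trans ⟨z :: E, [], by simp⟩) (hFy x hx) huv hu

theorem IsLongestCycleThrough.exists_arc_to_base (h : IsLongestCycleThrough A z (E ++ w :: F))
    (hy : y ∉ z :: (E ++ w :: F))
    (hyE : ∀ x ∈ E ++ [w], A y x) (hFy : ∀ x ∈ w :: F, A x y)
    (htotal : ∀ v ∉ z :: (E ++ w :: F),
      ReachIn A {x | x ∈ z :: (E ++ w :: F)}ᶜ v y ∨ ReachIn A {x | x ∈ z :: (E ++ w :: F)}ᶜ y v)
    (hEF : ∀ u ∈ E, ∀ v ∈ F, ¬ A u v) (ha : a ∈ E) (hb : b ∈ F) (hab : ReachIn A {w}ᶜ a b) :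
    ∃ u ∈ E, A u z := by
  by_contra! hEz
  set Y := {x | x ∈ z :: (E ++ w :: F)}ᶜ
  -- An arc leaving `E` and the vertices of `Y` that cannot reach `y` must go from `E` to `z`.
  obtain ⟨u, v, hu, hv, -, hvw, huv⟩ := hab.exists_exit
    (T := {v | v ∈ E ∨ v ∈ Y ∧ ¬ ReachIn A Y v y}) (.inl ha) (by have := h.nodup; grind)
  have hv' : v ∉ E ∧ (v ∈ F ++ [z] ∨ v ∈ Y ∧ ReachIn A Y v y) := by grind
  obtain hu | ⟨huY, huy⟩ := hu
  · obtain hv | ⟨-, hvy⟩ := hv'.2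
    · grind
    · exact h.not_reachIn_of_forall_arc_from hy hyE (List.mem_cons_of_mem z hu) huv hvy
  · obtain hv | ⟨hvY, hvy⟩ := hv'.2
    · exact h.not_reachIn_of_forall_arc_to huY hFy hv huv ((htotal u huY).resolve_left huy)
    · exact huy (.head ⟨huY, hvY, huv⟩ hvy)

theorem IsLongestCycleThrough.exists_arc_from_base (h : IsLongestCycleThrough A z (E ++ w :: F))
    (hy : y ∉ z :: (E ++ w :: F))
    (hyE : ∀ x ∈ E ++ [w], A y x) (hFy : ∀ x ∈ w :: F, A x y)
    (htotal : ∀ v ∉ z :: (E ++ w :: F),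
      ReachIn A {x | x ∈ z :: (E ++ w :: F)}ᶜ v y ∨ ReachIn A {x | x ∈ z :: (E ++ w :: F)}ᶜ y v)
    (hEF : ∀ u ∈ E, ∀ v ∈ F, ¬ A u v) (ha : a ∈ E) (hb : b ∈ F) (hab : ReachIn A {w}ᶜ a b) :
    ∃ v ∈ F, A z v := by
  by_contra! hzF
  set Y := {x | x ∈ z :: (E ++ w :: F)}ᶜ
  -- Dually, an arc into `F` and the vertices of `Y` unreachable from `y` must go from `z` to `F`.
  obtain ⟨u, v, hu, hv, huw, -, huv⟩ := hab.exists_exit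
    (T := {v | ¬ (v ∈ F ∨ v ∈ Y ∧ ¬ ReachIn A Y y v)}) (by have := h.nodup; grind) (by grind)
  have hu' : u ∉ F ∧ (u ∈ z :: E ∨ u ∈ Y ∧ ReachIn A Y y u) := by grind
  obtain hv | ⟨hvY, hyv⟩ := not_not.1 hv
  · obtain hu | ⟨huY, hyu⟩ := hu'.2
    · grind
    · exact h.not_reachIn_of_forall_arc_to huY hFy (List.mem_append_left [z] hv) huv hyu
  · obtain hu | ⟨huY, hyu⟩ := hu'.2
    · exact h.not_reachIn_of_forall_arc_from hy hyE hu huv ((htotal v hvY).resolve_right hyv)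
    · exact hyv (.tail hyu ⟨huY, hvY, huv⟩)

theorem IsLongestCycleThrough.exists_arc_over [Finite V] {y₁ y₂ : V}
    (h : IsLongestCycleThrough A z (E ++ w :: F)) (hirr : ∀ v, ¬ A v v)
    (hdeg : ∀ v ∉ z :: (E ++ w :: F), Nat.card V ≤ degree A v + 1)
    (hy₁ : y₁ ∉ z :: (E ++ w :: F)) (hy₂ : y₂ ∉ z :: (E ++ w :: F)) (hne : y₁ ≠ y₂)
    (hyE : ∀ x ∈ E ++ [w], A y₁ x ∧ A y₂ x) (hFy : ∀ x ∈ w :: F, A x y₁ ∧ A x y₂)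
    (ha : a ∈ E) (hb : b ∈ F) (hab : ReachIn A {w}ᶜ a b) :
    ∃ u ∈ E, ∃ v ∈ F, A u v := by
  by_contra! hEF
  have htotal (v) (hv : v ∉ z :: (E ++ w :: F)) :=
    h.reachIn_or_reachIn hirr hv hy₁ (hdeg v hv) (hdeg y₁ hy₁)
  have hy₁E (x) (hx : x ∈ E ++ [w]) := (hyE x hx).1
  have hFy₁ (x) (hx : x ∈ w :: F) := (hFy x hx).1
  obtain ⟨u, hu, huz⟩ := h.exists_arc_to_base hy₁ hy₁E hFy₁ htotal hEF ha hb hab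
  obtain ⟨v, hv, hzv⟩ := h.exists_arc_from_base hy₁ hy₁E hFy₁ htotal hEF ha hb hab
  obtain ⟨E₁, E₂, rfl⟩ := List.append_of_mem hu
  obtain ⟨F₁, F₂, rfl⟩ := List.append_of_mem hv
  have hsplit : (E₁ ++ u :: E₂) ++ w :: (F₁ ++ v :: F₂) =
      (E₁ ++ [u]) ++ (E₂ ++ w :: F₁) ++ v :: F₂ := by simp
  rw [hsplit] at h hy₁ hy₂
  have hhead : ∀ x ∈ (E₂ ++ w :: F₁).head?, x ∈ E₂ ++ [w] := by cases E₂ <;> simp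
  have hlonger := h.reroute (by simp) (by simp) (by simp) hy₁ hy₂ hne (by simpa using hzv)
    (fun x hx => (hFy x (by grind)).2) (fun x hx => (hyE x (by grind [hhead x hx])).2)
    (fun x hx => (hFy x (by grind)).1) (fun x hx => (hyE x (by grind)).1) (by simpa using huz)
  have := h.length_le _ hlonger
  grind

end CutVertex

section FinIndexed

variable {V : Type*} {A : V → V → Prop} {z : V} {m : ℕ} {x : Fin m → V}

theorem isLongestCycleThrough_ofFn (hm : 0 < m) (hxinj : Function.Injective x)
    (hzx : z ∉ Set.range x) (harc : ∀ (i : Fin m) (h : i.val + 1 < m), A (x i) (x ⟨i.val + 1, h⟩))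
    (harcz1 : A (x ⟨m - 1, by omega⟩) z) (harcz2 : A z (x ⟨0, hm⟩))
    (hlongest : ∀ (r : ℕ) (c : Fin r → V), IsCycle A c → z ∈ Set.range c → r ≤ m + 1) :
    IsLongestCycleThrough A z (List.ofFn x) where
  nodup := List.nodup_cons.2 ⟨by simpa [List.mem_ofFn] using hzx, List.nodup_ofFn.2 hxinj⟩
  isChain := by
    have hne : List.ofFn x ≠ [] := by simpa [List.ofFn_eq_nil_iff] using hm.ne'
    have hchain : (List.ofFn x).IsChain A :=
      List.isChain_iff_getElem.2 fun i hi => by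
        simpa using harc ⟨i, by simp at hi; omega⟩ (by simpa using hi)
    refine (hchain.append (.singleton z) ?_).cons ?_
    · rw [List.getLast?_eq_some_getLast hne, List.getLast_ofFn]
      simpa using harcz1
    · rw [List.head?_append_of_ne_nil _ hne, List.head?_eq_some_head hne, List.head_ofFn]
      simpa using harcz2
  length_le L hL := by
    rcases eq_or_ne L [] with rfl | hne
    · simp
    · simpa using hlongest _ _ (hL.isCycle_get hne) ⟨⟨0, by simp⟩, rfl⟩

theorem statement14_general [Finite V] (hirr : ∀ v, ¬ A v v)
    {l : ℕ} (hl : 2 ≤ l) (hlm : l < m)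
    (hxinj : Function.Injective x) (hzx : z ∉ Set.range x)
    (harc : ∀ (i : Fin m) (h : i.val + 1 < m), A (x i) (x ⟨i.val + 1, h⟩))
    (harcz1 : A (x ⟨m - 1, by omega⟩) z) (harcz2 : A z (x ⟨0, by omega⟩))
    (hlongest : ∀ (r : ℕ) (c : Fin r → V), IsCycle A c → z ∈ Set.range c → r ≤ m + 1)
    (hdeg : ∀ v ∉ Set.range x ∪ {z}, Nat.card V ≤ degree A v + 1)
    {y₁ y₂ : V} (hy₁ : y₁ ∉ Set.range x ∪ {z}) (hy₂ : y₂ ∉ Set.range x ∪ {z}) (hyne : y₁ ≠ y₂)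
    (hdom₁ : ∀ i : Fin m, l - 1 ≤ i.val → A (x i) y₁ ∧ A (x i) y₂)
    (hdom₂ : ∀ i : Fin m, i.val ≤ l - 1 → A y₁ (x i) ∧ A y₂ (x i))
    (hreach : ReachIn A {x ⟨l - 1, by omega⟩}ᶜ (x ⟨0, by omega⟩) (x ⟨m - 1, by omega⟩)) :
    ∃ i j : Fin m, i.val ≤ l - 2 ∧ l ≤ j.val ∧ A (x i) (x j) := by
  have h := isLongestCycleThrough_ofFn (by omega) hxinj hzx harc harcz1 harcz2 hlongest
  have hmem (v) : v ∈ z :: List.ofFn x ↔ v ∈ Set.range x ∪ {z} := by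
    simp [List.mem_ofFn]
  have hsplit := ofFn_eq_take_append_cons_drop x (show l - 1 < m by omega)
  rw [Nat.sub_add_cancel (by omega)] at hsplit
  rw [← hmem, hsplit] at hy₁ hy₂
  rw [hsplit] at h
  have hE (u) (hu : u ∈ (List.ofFn x).take (l - 1)) : A y₁ u ∧ A y₂ u := by
    obtain ⟨i, hi, rfl⟩ := mem_take_ofFn.1 hu
    exact hdom₂ i hi.le
  have hF (v) (hv : v ∈ (List.ofFn x).drop l) : A v y₁ ∧ A v y₂ := by
    obtain ⟨j, hj, rfl⟩ := mem_drop_ofFn.1 hv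
    exact hdom₁ j (by omega)
  have hfirst : x ⟨0, by omega⟩ ∈ (List.ofFn x).take (l - 1) :=
    mem_take_ofFn.2 ⟨_, show 0 < l - 1 by omega, rfl⟩
  have hlast : x ⟨m - 1, by omega⟩ ∈ (List.ofFn x).drop l :=
    mem_drop_ofFn.2 ⟨_, show l ≤ m - 1 by omega, rfl⟩
  obtain ⟨_, hu, _, hv, huv⟩ := h.exists_arc_over hirr
    (fun v hv => hdeg v ((hmem v).not.1 (hsplit ▸ hv))) hy₁ hy₂ hyne
    (List.forall_mem_append.2 ⟨hE, List.forall_mem_singleton.2 (hdom₂ _ le_rfl)⟩)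
    (List.forall_mem_cons.2 ⟨hdom₁ _ le_rfl, hF⟩) hfirst hlast hreach
  obtain ⟨i, hi, rfl⟩ := mem_take_ofFn.1 hu
  obtain ⟨j, hj, rfl⟩ := mem_drop_ofFn.1 hv
  exact ⟨i, j, by omega, hj, huv⟩

end FinIndexed

/-- Claim 1(ii): in the situation of Lemma 4 with `l` as in (1), set
`E = {x₁, …, x_{l-1}}` (indices `≤ l - 2` in `Fin m`) and `F = {x_{l+1}, …, x_m}`
(indices `≥ l` in `Fin m`).  Then there is at least one arc from a vertex of `E`
to a vertex of `F`. -/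
theorem statement14 {V : Type*} [Fintype V] [DecidableEq V] (A : V → V → Prop)
    (hirr : Irreflexive A)
    (n : ℕ) (hcard : Fintype.card V = n)
    (h2strong : IsKStrong A 2)
    (hnonham : ¬ IsHamiltonian A)
    (z : V)
    (hdeg : ∀ v : V, v ≠ z → n + 1 ≤ degree A v)
    (hdegz : degree A z ≤ n - 2)
    (m : ℕ) (hm2 : 2 ≤ m) (hmn : m ≤ n - 3)
    -- the cycle C = x₁ x₂ … x_m z x₁ of length m + 1 through z
    (x : Fin m → V) (hxinj : Function.Injective x) (hzx : z ∉ Set.range x)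
    (harc : ∀ (i : Fin m) (h : i.val + 1 < m), A (x i) (x ⟨i.val + 1, h⟩))
    (harcz1 : A (x ⟨m - 1, by omega⟩) z)
    (harcz2 : A z (x ⟨0, by omega⟩))
    -- C is a longest cycle through z
    (hlongest : ∀ (r : ℕ) (c : Fin r → V), IsCycle A c → z ∈ Set.range c → r ≤ m + 1)
    (Y : Set V) (hY : Y = (Set.range x ∪ {z})ᶜ)
    (y₁ y₂ : V) (hy₁ : y₁ ∈ Y) (hy₂ : y₂ ∈ Y) (hyne : y₁ ≠ y₂)
    -- y₁ and y₂ are mutually reachable in D⟨Y⟩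
    (hreach₁ : ReachIn A Y y₁ y₂) (hreach₂ : ReachIn A Y y₂ y₁)
    (hdy₁ : degreeIn A y₁ (Set.range x) = m + 1)
    (hdy₂ : degreeIn A y₂ (Set.range x) = m + 1)
    (l : ℕ) (hl2 : 2 ≤ l) (hlm : l ≤ m - 1)
    (hdom₁ : ∀ i : Fin m, l - 1 ≤ i.val → A (x i) y₁ ∧ A (x i) y₂)
    (hdom₂ : ∀ i : Fin m, i.val ≤ l - 1 → A y₁ (x i) ∧ A y₂ (x i)) :
    ∃ i j : Fin m, i.val ≤ l - 2 ∧ l ≤ j.val ∧ A (x i) (x j) := by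
  subst hcard hY
  have hdeg' (v) (hv : v ∉ Set.range x ∪ {z}) : Nat.card V ≤ degree A v + 1 := by
    have := hdeg v (by rintro rfl; simp at hv)
    rw [Nat.card_eq_fintype_card]
    omega
  have hcut : ReachIn A {x ⟨l - 1, by omega⟩}ᶜ (x ⟨0, by omega⟩) (x ⟨m - 1, by omega⟩) := by
    refine h2strong.2 {_} (by simp) _ (hxinj.ne ?_) _ (hxinj.ne ?_) <;>
      simp only [ne_eq, Fin.mk.injEq] <;> omega
  exact statement14_general hirr hl2 (by omega) hxinj hzx harc harcz1 harcz2 hlongest hdeg'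
    hy₁ hy₂ hyne hdom₁ hdom₂ hcut
end
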